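/- Let (R, m) be a d-dimensional complete Noetherian local domain of prime characteristic p with absolute integral closure R^+, let Λ be an uncountable set of indeterminates, and let T = R^+(t_λ : λ ∈ Λ). Let x_1, …, x_d be a system of parameters of R. Then for every 1 ≤ n ≤ d and every y ∈ R, there exists a positive integer N_0 such that (x_1, …, x_n)T :_T y^∞ = (x_1, …, x_n)T :_T y^{N_0}. -/

import Mathlib

open IsLocalRing TensorProduct
set_option synthInstance.maxHeartbeats 1000000
set_option maxHeartbeats 1000000

/-- The absolute integral closure `R⁺` of a domain `R`: the integral closure of `R`
in an algebraic closure of its fraction field. -/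
noncomputable abbrev RPlus (R : Type) [CommRing R] [IsDomain R] : Type :=
  ↥(integralClosure R (AlgebraicClosure (FractionRing R)))

/-- A system of parameters of a local ring: `d` elements generating an ideal whose
radical is the maximal ideal, where `d` is the Krull dimension. -/
def IsSOP (R : Type) [CommRing R] [IsLocalRing R] {d : ℕ} (x : Fin d → R) : Prop :=
  ringKrullDim R = d ∧ (Ideal.span (Set.range x)).radical = maximalIdeal R

/-- `T = R⁺(t_λ : λ ∈ Λ)`: the localization of the polynomial ring `R⁺[t_λ : λ ∈ Λ]`
at the prime ideal generated by the maximal ideal of the quasilocal ring `R⁺`. -/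
noncomputable abbrev TRing (R : Type) [CommRing R] [IsDomain R] (Λ : Type)
    [IsLocalRing (RPlus R)]
    [hP : (Ideal.map (MvPolynomial.C (σ := Λ)) (maximalIdeal (RPlus R))).IsPrime] : Type :=
  Localization.AtPrime (Ideal.map (MvPolynomial.C (σ := Λ)) (maximalIdeal (RPlus R)))

/-- The canonical map `R⁺ → T`. -/
noncomputable def plusToT (R : Type) [CommRing R] [IsDomain R] (Λ : Type)
    [IsLocalRing (RPlus R)]
    [hP : (Ideal.map (MvPolynomial.C (σ := Λ)) (maximalIdeal (RPlus R))).IsPrime] :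
    RPlus R →+* TRing R Λ :=
  (algebraMap (MvPolynomial Λ (RPlus R)) (TRing R Λ)).comp MvPolynomial.C

/-- The canonical map `R → T`. -/
noncomputable def toT (R : Type) [CommRing R] [IsDomain R] (Λ : Type)
    [IsLocalRing (RPlus R)]
    [hP : (Ideal.map (MvPolynomial.C (σ := Λ)) (maximalIdeal (RPlus R))).IsPrime] :
    R →+* TRing R Λ :=
  (plusToT R Λ).comp (algebraMap R (RPlus R))


section Part1
open Function
open scoped Pointwise

section
variable {B : Type} [CommRing B] {K F M : Type} [AddCommGroup K] [Module B K]
  [AddCommGroup F] [Module B F] [AddCommGroup M] [Module B M]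

theorem hh_T1 [Module.Flat B F] (i : K →ₗ[B] F) (f : F →ₗ[B] M)
    (he : Exact i f) (hf : Surjective f)
    (H : ∀ I : Ideal B, Injective (i.lTensor (B ⧸ I))) : Module.Flat B M := by
  rw [Module.Flat.iff_lTensor_injective']
  intro I
  refine lTensor_injective_of_exact_of_exact_of_rTensor_injective he hf
    (LinearMap.exact_subtype_mkQ I) (Submodule.mkQ_surjective _)
    ((LinearMap.lTensor_inj_iff_rTensor_inj _ _).mp (H I)) ?_
  exact Module.Flat.lTensor_preserves_injective_linearMap _ Subtype.val_injective

theorem hh_T2 [Module.Flat B F] (i : K →ₗ[B] F)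
    {N₁ N₂ N₃ : Type} [AddCommGroup N₁] [Module B N₁] [AddCommGroup N₂] [Module B N₂]
    [AddCommGroup N₃] [Module B N₃] (j : N₁ →ₗ[B] N₂) (g : N₂ →ₗ[B] N₃)
    (hj : Injective j) (he : Exact j g) (hg : Surjective g)
    (h1 : Injective (i.lTensor N₁)) (h3 : Injective (i.lTensor N₃)) :
    Injective (i.lTensor N₂) := by
  rw [injective_iff_map_eq_zero]
  intro u hu
  have h : g.rTensor K u = 0 := by
    apply h3
    rw [map_zero, ← LinearMap.comp_apply, LinearMap.lTensor_comp_rTensor,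
      ← LinearMap.rTensor_comp_lTensor, LinearMap.comp_apply, hu, map_zero]
  obtain ⟨w, rfl⟩ := (rTensor_exact K he hg u).mp h
  have : i.lTensor N₁ w = 0 := by
    apply Module.Flat.rTensor_preserves_injective_linearMap (M := F) j hj
    rw [map_zero, ← hu, ← LinearMap.comp_apply, LinearMap.rTensor_comp_lTensor,
      ← LinearMap.lTensor_comp_rTensor, LinearMap.comp_apply]
  rw [h1 (this.trans (map_zero _).symm), map_zero]

theorem hh_T3 [Module.Flat B K] (i : K →ₗ[B] F)
    {N₁ N₂ : Type} [AddCommGroup N₁] [Module B N₁] [AddCommGroup N₂] [Module B N₂]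
    (j : N₁ →ₗ[B] N₂) (hj : Injective j) (h2 : Injective (i.lTensor N₂)) :
    Injective (i.lTensor N₁) := by
  have h := h2.comp (Module.Flat.rTensor_preserves_injective_linearMap (M := K) j hj)
  rw [← LinearMap.coe_comp, LinearMap.lTensor_comp_rTensor, ← LinearMap.rTensor_comp_lTensor,
    LinearMap.coe_comp] at h
  exact h.of_comp

theorem hh_flat_ker [Module.Flat B F] [Module.Flat B M] (i : K →ₗ[B] F) (f : F →ₗ[B] M)
    (hi : Injective i) (he : Exact i f) (hf : Surjective f) : Module.Flat B K := by
  rw [Module.Flat.iff_lTensor_injective']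
  intro I
  have h1 := LinearMap.lTensor_injective_of_exact_of_flat f hf i hi he I
  have h2 := (Module.Flat.rTensor_preserves_injective_linearMap (M := F) I.subtype
    Subtype.val_injective).comp h1
  rw [← LinearMap.coe_comp, LinearMap.rTensor_comp_lTensor, ← LinearMap.lTensor_comp_rTensor,
    LinearMap.coe_comp] at h2
  rw [LinearMap.lTensor_inj_iff_rTensor_inj]
  exact h2.of_comp

/-- injectivity of `B/I ⊗ i` elementwise -/
theorem hh_quot_inj (i : K →ₗ[B] F) (I : Ideal B) :
    Injective (i.lTensor (B ⧸ I)) ↔ ∀ z, i z ∈ I • (⊤ : Submodule B F) → z ∈ I • (⊤ : Submodule B K) := by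
  have key : ∀ (N : Type) [AddCommGroup N] [Module B N] (z : N),
      ((1 : B ⧸ I) ⊗ₜ[B] z = 0 ↔ z ∈ I • (⊤ : Submodule B N)) := by
    intro N _ _ z
    rw [← (TensorProduct.quotTensorEquivQuotSMul N I).map_eq_zero_iff]
    rw [← map_one (Ideal.Quotient.mk I), TensorProduct.quotTensorEquivQuotSMul_mk_tmul, one_smul,
      Submodule.Quotient.mk_eq_zero]
  rw [injective_iff_map_eq_zero]
  constructor
  · intro H z hz
    rw [← key] at hz ⊢
    exact H _ (by simpa using hz)
  · intro H u hu
    obtain ⟨z, rfl⟩ := TensorProduct.mk_surjective B K (B ⧸ I) Ideal.Quotient.mk_surjective u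
    simp only [TensorProduct.mk_apply, LinearMap.lTensor_tmul] at hu ⊢
    rw [key] at hu ⊢
    exact H z hu
end

open RingTheory.Sequence

theorem hh_reg_quot {B : Type} [CommRing B] (rs : List B) : ∀ {K F M : Type} [AddCommGroup K]
    [Module B K] [AddCommGroup F] [Module B F] [AddCommGroup M] [Module B M]
    (i : K →ₗ[B] F) (f : F →ₗ[B] M) (_ : Injective i) (_ : Exact i f) (_ : Surjective f)
    (_ : IsWeaklyRegular M rs) (z : K), i z ∈ Ideal.ofList rs • (⊤ : Submodule B F) →
      z ∈ Ideal.ofList rs • (⊤ : Submodule B K) := by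
  induction rs with
  | nil =>
    intro K F M _ _ _ _ _ _ i f hi he hf hr z hz
    simp only [Ideal.ofList_nil, Submodule.bot_smul, Submodule.mem_bot] at hz ⊢
    exact hi (by simpa using hz)
  | cons a rs ih =>
    intro K F M _ _ _ _ _ _ i f hi he hf hr z hz
    rw [isWeaklyRegular_cons_iff] at hr
    have h0 : Exact (0 : Unit →ₗ[B] K) i := by
      intro x; constructor
      · intro h; exact ⟨(), (hi (h.trans (map_zero i).symm)).symm⟩
      · rintro ⟨_, rfl⟩; simp
    have hi' : Injective (QuotSMulTop.map a i) := by
      have := QuotSMulTop.map_first_exact_on_four_term_exact_of_isSMulRegular_last h0 he hr.1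
      rw [injective_iff_map_eq_zero]
      intro u hu
      obtain ⟨w, rfl⟩ := (this u).mp hu
      obtain ⟨w, rfl⟩ := Submodule.Quotient.mk_surjective _ w
      have := QuotSMulTop.map_apply_mk a (0 : Unit →ₗ[B] K) w
      rw [this]; simp
    have key := ih (QuotSMulTop.map a i) (QuotSMulTop.map a f) hi'
      (QuotSMulTop.map_exact a he hf) (QuotSMulTop.map_surjective a hf) hr.2
      (Submodule.Quotient.mk z) ?_
    · have : ∀ (N : Type) [AddCommGroup N] [Module B N] (z : N),
        (Submodule.Quotient.mk z : QuotSMulTop a N) ∈ Ideal.ofList rs • (⊤ : Submodule B _) →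
        z ∈ Ideal.ofList (a :: rs) • (⊤ : Submodule B N) := by
        intro N _ _ z hz
        rw [Ideal.ofList_cons_smul]
        rw [← (Submodule.range_mkQ (a • (⊤ : Submodule B N))), ← Submodule.map_top,
          ← Submodule.map_smul''] at hz
        obtain ⟨w, hw, hwz⟩ := hz
        rw [Submodule.mkQ_apply, Submodule.Quotient.eq] at hwz
        have : z = -(w - z) + w := by abel
        rw [this]
        exact Submodule.add_mem_sup (neg_mem hwz) hw
      exact this K z key
    · rw [QuotSMulTop.map_apply_mk]
      rw [Ideal.ofList_cons_smul] at hz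
      obtain ⟨u, hu, w, hw, huw⟩ := Submodule.mem_sup.mp hz
      rw [← huw, Submodule.Quotient.mk_add, (Submodule.Quotient.mk_eq_zero _).mpr hu, zero_add]
      have : (Submodule.Quotient.mk w : QuotSMulTop a F) ∈
        (Ideal.ofList rs • (⊤ : Submodule B F)).map (a • (⊤ : Submodule B F)).mkQ := ⟨w, hw, rfl⟩
      rw [Submodule.map_smul''] at this
      exact Submodule.smul_mono le_rfl le_top this

theorem hh_quotmap_inj {B : Type} [CommRing B] {K F M : Type} [AddCommGroup K]
    [Module B K] [AddCommGroup F] [Module B F] [AddCommGroup M] [Module B M]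
    (i : K →ₗ[B] F) (f : F →ₗ[B] M) (hi : Injective i) (he : Exact i f) (a : B)
    (ha : IsSMulRegular M a) : Injective (QuotSMulTop.map a i) := by
  have h0 : Exact (0 : Unit →ₗ[B] K) i := by
    intro x; constructor
    · intro h; exact ⟨(), (hi (h.trans (map_zero i).symm)).symm⟩
    · rintro ⟨_, rfl⟩; simp
  have := QuotSMulTop.map_first_exact_on_four_term_exact_of_isSMulRegular_last h0 he ha
  rw [injective_iff_map_eq_zero]
  intro u hu
  obtain ⟨w, rfl⟩ := (this u).mp hu
  obtain ⟨w, rfl⟩ := Submodule.Quotient.mk_surjective _ w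
  have := QuotSMulTop.map_apply_mk a (0 : Unit →ₗ[B] K) w
  rw [this]; simp

theorem hh_reg_ker {B : Type} [CommRing B] (r : B) (rs : List B) : ∀ {K F M : Type} [AddCommGroup K]
    [Module B K] [AddCommGroup F] [Module B F] [AddCommGroup M] [Module B M]
    (i : K →ₗ[B] F) (f : F →ₗ[B] M) (_ : Injective i) (_ : Exact i f) (_ : Surjective f)
    (_ : IsWeaklyRegular M rs) (_ : IsWeaklyRegular F (rs ++ [r])), 
      IsWeaklyRegular K (rs ++ [r]) := by
  induction rs with
  | nil =>
    intro K F M _ _ _ _ _ _ i f hi he hf hr hF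
    simp only [List.nil_append, isWeaklyRegular_singleton_iff] at hF ⊢
    intro x y hxy
    apply hi; apply hF
    simpa using congrArg i hxy
  | cons a rs ih =>
    intro K F M _ _ _ _ _ _ i f hi he hf hr hF
    simp only [List.cons_append, isWeaklyRegular_cons_iff] at hr hF ⊢
    refine ⟨?_, ?_⟩
    · intro x y hxy
      apply hi; apply hF.1
      simpa using congrArg i hxy
    · exact ih _ _ (hh_quotmap_inj i f hi he a hr.1) (QuotSMulTop.map_exact a he hf)
        (QuotSMulTop.map_surjective a hf) hr.2 hF.2

theorem hh_reg_ker' {B : Type} [CommRing B] (rs : List B) {K F M : Type} [AddCommGroup K]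
    [Module B K] [AddCommGroup F] [Module B F] [AddCommGroup M] [Module B M]
    (i : K →ₗ[B] F) (f : F →ₗ[B] M) (hi : Injective i) (he : Exact i f) (hf : Surjective f)
    (hM : IsWeaklyRegular M rs) (hF : IsWeaklyRegular F rs) : IsWeaklyRegular K rs := by
  rcases List.eq_nil_or_concat rs with rfl | ⟨l, b, rfl⟩
  · exact IsWeaklyRegular.nil B K
  · rw [List.concat_eq_append] at hM hF ⊢
    refine hh_reg_ker b l i f hi he hf ?_ hF
    rw [isWeaklyRegular_append_iff] at hM
    exact hM.1

/-- flat dimension at most n -/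
def hhFD (B : Type) [CommRing B] : ℕ → ∀ (M : Type) [AddCommGroup M] [Module B M], Prop
  | 0, M, _, _ => Module.Flat B M
  | n + 1, M, _, _ => ∃ (K F : Type) (_ : AddCommGroup K) (_ : Module B K) (_ : AddCommGroup F)
      (_ : Module B F) (i : K →ₗ[B] F) (f : F →ₗ[B] M),
      Module.Flat B F ∧ Injective i ∧ Exact i f ∧ Surjective f ∧ hhFD B n K

theorem hhFD_localize {B : Type} [CommRing B] (S : Submonoid B) (n : ℕ) :
    ∀ (M : Type) [AddCommGroup M] [Module B M], hhFD B n M →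
      hhFD (Localization S) n (LocalizedModule S M) := by
  induction n with
  | zero =>
    intro M _ _ (h : Module.Flat B M)
    exact Module.Flat.localizedModule S
  | succ n ih =>
    rintro M _ _ ⟨K, F, _, _, _, _, i, f, hF, hi, he, hf, hK⟩
    exact ⟨LocalizedModule S K, LocalizedModule S F, inferInstance, inferInstance, inferInstance,
      inferInstance, LocalizedModule.map S i, LocalizedModule.map S f,
      Module.Flat.localizedModule S, LocalizedModule.map_injective S i hi,
      LocalizedModule.map_exact S i f he,
      LocalizedModule.map_surjective S f hf, ih K hK⟩

/-- Tor_1(N,M)=0 -/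
def hhP (B : Type) [CommRing B] (N M : Type) [AddCommGroup N] [Module B N]
    [AddCommGroup M] [Module B M] : Prop :=
  ∀ (K F : Type) [AddCommGroup K] [Module B K] [AddCommGroup F] [Module B F]
    (i : K →ₗ[B] F) (f : F →ₗ[B] M), Module.Flat B F → Injective i → Exact i f → Surjective f →
    Injective (i.lTensor N)

theorem hh_shift {B : Type} [CommRing B] {K F M Z G N : Type} [AddCommGroup K] [Module B K]
    [AddCommGroup F] [Module B F] [AddCommGroup M] [Module B M]
    [AddCommGroup Z] [Module B Z] [AddCommGroup G] [Module B G] [AddCommGroup N] [Module B N]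
    (i : K →ₗ[B] F) (f : F →ₗ[B] M) (j : Z →ₗ[B] G) (g : G →ₗ[B] N)
    [Module.Flat B F] [Module.Flat B G] (hi : Injective i) (he : Exact i f) (hf : Surjective f)
    (hj : Injective j) (he' : Exact j g) (hg : Surjective g) (hP : hhP B Z M) : hhP B N K := by
  intro K' F' _ _ _ _ i' f' hF' hi' hex hf'
  refine lTensor_injective_of_exact_of_exact_of_rTensor_injective he' hg hex hf' ?_
    (Module.Flat.lTensor_preserves_injective_linearMap _ hi')
  have h1 := hP K F i f inferInstance hi he hf
  have h2 := (Module.Flat.rTensor_preserves_injective_linearMap (M := F) j hj).comp h1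
  rw [← LinearMap.coe_comp, LinearMap.rTensor_comp_lTensor, ← LinearMap.lTensor_comp_rTensor,
    LinearMap.coe_comp] at h2
  exact h2.of_comp

theorem hh_exists_pres (B : Type) [CommRing B] (M : Type) [AddCommGroup M] [Module B M] :
    ∃ (K F : Type) (_ : AddCommGroup K) (_ : Module B K) (_ : AddCommGroup F)
      (_ : Module B F) (i : K →ₗ[B] F) (f : F →ₗ[B] M),
      Module.Flat B F ∧ Injective i ∧ Exact i f ∧ Surjective f := by
  let f := Finsupp.linearCombination B (id : M → M)
  exact ⟨LinearMap.ker f, M →₀ B, inferInstance, inferInstance, inferInstance, inferInstance,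
    (LinearMap.ker f).subtype, f, inferInstance, Subtype.val_injective,
    LinearMap.exact_subtype_ker_map f, Finsupp.linearCombination_surjective _ surjective_id⟩

theorem hh_FD_of_fg {B : Type} [CommRing B] (n : ℕ)
    (H : ∀ I : Ideal B, hhFD B n (B ⧸ I)) (M : Type) [AddCommGroup M] [Module B M] :
    hhFD B n M := by
  have key : ∀ m j, m + j = n → ∀ (M : Type) [AddCommGroup M] [Module B M],
      (∀ (N : Type) [AddCommGroup N] [Module B N], hhFD B j N → hhP B N M) → hhFD B m M := by
    intro m
    induction m with
    | zero =>
      intro j hj M _ _ hM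
      obtain rfl : j = n := by omega
      obtain ⟨K, F, _, _, _, _, i, f, hF, hi, he, hf⟩ := hh_exists_pres B M
      exact hh_T1 i f he hf fun I => hM _ (H I) K F i f hF hi he hf
    | succ m ih =>
      intro j hj M _ _ hM
      obtain ⟨K, F, _, _, _, _, i, f, hF, hi, he, hf⟩ := hh_exists_pres B M
      refine ⟨K, F, _, _, _, _, i, f, hF, hi, he, hf, ih (j+1) (by omega) K ?_⟩
      rintro N _ _ ⟨Z, G, _, _, _, _, j', g, hG, hj', he', hg, hZ⟩
      exact hh_shift i f j' g hi he hf hj' he' hg (hM Z hZ)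
  refine key n 0 rfl M ?_
  intro N _ _ (hN : Module.Flat B N) K F _ _ _ _ i f hF hi he hf
  exact Module.Flat.lTensor_preserves_injective_linearMap _ hi

end Part1


section Part2
open Function RingTheory.Sequence

theorem hh_flat_reg {B : Type} [CommRing B] {M : Type} [AddCommGroup M] [Module B M]
    [Module.Flat B M] {rs : List B} (h : IsWeaklyRegular B rs) : IsWeaklyRegular M rs :=
  ((TensorProduct.rid B M).isWeaklyRegular_congr rs).mp h.isWeaklyRegular_lTensor

theorem hh_fin_pres (B : Type) [CommRing B] [IsNoetherianRing B] (M : Type) [AddCommGroup M]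
    [Module B M] [Module.Finite B M] :
    ∃ (K F : Type) (_ : AddCommGroup K) (_ : Module B K) (_ : AddCommGroup F)
      (_ : Module B F) (i : K →ₗ[B] F) (f : F →ₗ[B] M), Module.Finite B K ∧ Module.Finite B F ∧ 
      Module.Free B F ∧ Injective i ∧ Exact i f ∧ Surjective f := by
  obtain ⟨n, f, hf⟩ := Module.Finite.exists_fin' B M
  exact ⟨LinearMap.ker f, Fin n → B, inferInstance, inferInstance, inferInstance, inferInstance,
    (LinearMap.ker f).subtype, f, inferInstance, inferInstance, inferInstance,
    Subtype.val_injective, LinearMap.exact_subtype_ker_map f, hf⟩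

theorem hh_gl {A : Type} [CommRing A] [IsNoetherianRing A] [IsLocalRing A] (rs : List A)
    (hrs : IsWeaklyRegular A rs) (hm : Ideal.ofList rs = maximalIdeal A) (l2 : List A) :
    ∀ (l1 : List A) (_ : rs = l1 ++ l2) (N : Type) [AddCommGroup N] [Module A N]
      [Module.Finite A N] (_ : IsWeaklyRegular N l1), hhFD A l2.length N := by
  induction l2 with
  | nil =>
    intro l1 hl N _ _ _ hN
    rw [List.append_nil] at hl
    subst hl
    obtain ⟨K, F, _, _, _, _, i, f, hK, hF, hFr, hi, he, hf⟩ := hh_fin_pres A N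
    have : Module.Free A N := by
      apply Module.free_of_lTensor_residueField_injective i f hf he
      have := (hh_quot_inj i (Ideal.ofList rs)).mpr (hh_reg_quot rs i f hi he hf hN)
      rw [hm] at this
      exact this
    change Module.Flat A N
    infer_instance
  | cons r l2 ih =>
    intro l1 hl N _ _ _ hN
    obtain ⟨K, F, _, _, _, _, i, f, hK, hF, hFr, hi, he, hf⟩ := hh_fin_pres A N
    refine ⟨K, F, _, _, _, _, i, f, inferInstance, hi, he, hf, ?_⟩
    have hl' : rs = (l1 ++ [r]) ++ l2 := by simp [hl]
    refine ih (l1 ++ [r]) hl' K ?_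
    refine hh_reg_ker r l1 i f hi he hf hN (hh_flat_reg ?_)
    rw [hl', isWeaklyRegular_append_iff] at hrs
    exact hrs.1

theorem hh_gldim {A : Type} [CommRing A] [IsNoetherianRing A] [IsLocalRing A] (rs : List A)
    (hrs : IsWeaklyRegular A rs) (hm : Ideal.ofList rs = maximalIdeal A) 
    (M : Type) [AddCommGroup M] [Module A M] : hhFD A rs.length M :=
  hh_FD_of_fg _ (fun I => hh_gl rs hrs hm rs [] (by simp) _ (IsWeaklyRegular.nil _ _)) M

end Part2


section Part3
open Function RingTheory.Sequence

theorem hh_max_reg (B : Type) [CommRing B] [IsNoetherianRing B] [IsLocalRing B] :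
    ∃ (rs : List B), (∀ r ∈ rs, r ∈ maximalIdeal B) ∧ IsWeaklyRegular B rs ∧
      ∃ f : (B ⧸ maximalIdeal B) →ₗ[B] (B ⧸ Ideal.ofList rs), Injective f := by
  let 𝒮 : Set (Ideal B) := {I | ∃ rs : List B, (∀ r ∈ rs, r ∈ maximalIdeal B) ∧
    IsWeaklyRegular B rs ∧ I = Ideal.ofList rs}
  obtain ⟨I, ⟨rs, h1, h2, rfl⟩, hmax⟩ := set_has_maximal_iff_noetherian.mpr
    (inferInstanceAs (IsNoetherian B B)) 𝒮 ⟨_, [], by simp, IsWeaklyRegular.nil _ _, rfl⟩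
  refine ⟨rs, h1, h2, ?_⟩
  have hle : Ideal.ofList rs ≤ maximalIdeal B := Ideal.span_le.mpr h1
  have hnt : Nontrivial (B ⧸ Ideal.ofList rs) := Ideal.Quotient.nontrivial_iff.mpr
    (fun h => (maximalIdeal.isMaximal B).ne_top (top_le_iff.mp (h ▸ hle)))
  have hz : ∀ r ∈ maximalIdeal B, ¬ IsSMulRegular (B ⧸ Ideal.ofList rs) r := by
    intro r hr hreg
    have hmem : Ideal.ofList (rs ++ [r]) ∈ 𝒮 := by
      refine ⟨rs ++ [r], ?_, ?_, rfl⟩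
      · intro s hs
        rcases List.mem_append.mp hs with h | h
        · exact h1 s h
        · rw [List.mem_singleton.mp h]; exact hr
      · rw [isWeaklyRegular_append_iff, isWeaklyRegular_singleton_iff]
        refine ⟨h2, ?_⟩
        have he : (Ideal.ofList rs • ⊤ : Submodule B B) = Ideal.ofList rs := by simp
        rw [he]; exact hreg
    have hlt := hmax _ hmem
    have hr' : r ∈ Ideal.ofList rs := by
      by_contra hn
      apply hlt
      rw [Ideal.ofList_append, Ideal.ofList_singleton]
      refine lt_of_le_of_ne le_sup_left fun h => hn ?_
      rw [h]
      exact Ideal.mem_sup_right (Ideal.mem_span_singleton_self r)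
    have h0 : (1 : B ⧸ Ideal.ofList rs) = 0 := by
      apply hreg
      change r • (1 : B ⧸ Ideal.ofList rs) = r • 0
      rw [smul_zero, ← map_one (Ideal.Quotient.mk _)]
      change Ideal.Quotient.mk _ (r * 1) = 0
      rw [mul_one, Ideal.Quotient.eq_zero_iff_mem.mpr hr']
    exact one_ne_zero h0
  have hsub : (maximalIdeal B : Set B) ⊆ ⋃ p ∈ associatedPrimes B (B ⧸ Ideal.ofList rs), p := by
    rw [biUnion_associatedPrimes_eq_compl_regular]
    exact fun r hr => hz r hr
  have fin := associatedPrimes.finite B (B ⧸ Ideal.ofList rs)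
  obtain ⟨P, hP, hle⟩ := ((maximalIdeal B).subset_union_prime_finite fin (f := id) 0 0
    fun _ h _ _ ↦ h.isPrime).1 hsub
  have hPm : P = maximalIdeal B := 
    ((maximalIdeal.isMaximal B).eq_of_le hP.isPrime.ne_top hle).symm
  subst hPm
  exact ((isAssociatedPrime_iff_exists_injective_linearMap _ _).mp hP).2

theorem hh_loc_smul {B : Type} [CommRing B] (Q : Ideal B) [Q.IsPrime] {K : Type} [AddCommGroup K]
    [Module B K] [Module.Flat B K] (z : K)
    (hz : LocalizedModule.mkLinearMap Q.primeCompl K z ∈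
      Q • (⊤ : Submodule B (LocalizedModule Q.primeCompl K))) : z ∈ Q • (⊤ : Submodule B K) := by
  have h1 : Q • (⊤ : Submodule B (LocalizedModule Q.primeCompl K)) ≤
      (Q • (⊤ : Submodule B K)).localized₀ Q.primeCompl (LocalizedModule.mkLinearMap Q.primeCompl K) := by
    rw [Submodule.smul_le]
    intro q hq w _
    obtain ⟨⟨k, s⟩, rfl⟩ := IsLocalizedModule.mk'_surjective Q.primeCompl
      (LocalizedModule.mkLinearMap Q.primeCompl K) w
    refine ⟨q • k, Submodule.smul_mem_smul hq trivial, s, ?_⟩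
    simp [IsLocalizedModule.mk'_smul]
  obtain ⟨m, hm, s, hs⟩ := h1 hz
  rw [IsLocalizedModule.mk'_eq_iff, ← LinearMap.map_smul_of_tower,
    IsLocalizedModule.eq_iff_exists Q.primeCompl] at hs
  obtain ⟨c, hc⟩ := hs
  have hxz : (c * s : B) • z ∈ Q • (⊤ : Submodule B K) := by
    rw [mul_smul]
    have : (c : B) • (s : B) • z = c • s • z := rfl
    rw [this, ← hc]
    exact Submodule.smul_mem _ _ hm
  have hcs : (c * s : B) ∉ Q := (c * s).2
  have hreg : IsSMulRegular (B ⧸ Q) (c * s : B) := by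
    rw [isSMulRegular_iff_right_eq_zero_of_smul]
    intro x hx
    obtain ⟨x, rfl⟩ := Ideal.Quotient.mk_surjective x
    change Ideal.Quotient.mk Q ((c * s) * x) = 0 at hx
    rw [Ideal.Quotient.eq_zero_iff_mem] at hx ⊢
    exact (Ideal.IsPrime.mem_or_mem inferInstance hx).resolve_left hcs
  have hreg' : IsSMulRegular (K ⧸ (Q • (⊤ : Submodule B K))) (c * s : B) := by
    rw [← (TensorProduct.quotTensorEquivQuotSMul K Q).isSMulRegular_congr]
    exact hreg.rTensor K
  exact mem_of_isSMulRegular_quotient_of_smul_mem hreg' hxz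

theorem hh_D_step {B : Type} [CommRing B] [IsNoetherianRing B] [IsLocalRing B]
    {K F M : Type} [AddCommGroup K] [Module B K]
    [AddCommGroup F] [Module B F] [AddCommGroup M] [Module B M]
    [Module.Flat B F] [Module.Flat B K] (i : K →ₗ[B] F) (f : F →ₗ[B] M)
    (hi : Injective i) (he : Exact i f) (hf : Surjective f)
    (hreg : ∀ rs : List B, (∀ r ∈ rs, r ∈ maximalIdeal B) → IsWeaklyRegular B rs →
      IsWeaklyRegular M rs)
    (hloc : ∀ (Q : Ideal B) [Q.IsPrime], Q ≠ maximalIdeal B →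
      Module.Flat B (LocalizedModule Q.primeCompl M)) : Module.Flat B M := by
  have hprime : ∀ (Q : Ideal B) [Q.IsPrime], Injective (i.lTensor (B ⧸ Q)) := by
    intro Q _
    by_cases hQ : Q = maximalIdeal B
    · subst hQ
      obtain ⟨rs, h1, h2, j, hj⟩ := hh_max_reg B
      refine hh_T3 i j hj ?_
      rw [hh_quot_inj]
      exact hh_reg_quot rs i f hi he hf (hreg rs h1 h2)
    · have := hloc Q hQ
      rw [hh_quot_inj]
      intro z hz
      apply hh_loc_smul Q z
      let S := Q.primeCompl
      let i' : LocalizedModule S K →ₗ[B] LocalizedModule S F :=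
        IsLocalizedModule.map S (LocalizedModule.mkLinearMap S K) (LocalizedModule.mkLinearMap S F) i
      let f' : LocalizedModule S F →ₗ[B] LocalizedModule S M :=
        IsLocalizedModule.map S (LocalizedModule.mkLinearMap S F) (LocalizedModule.mkLinearMap S M) f
      have hi' : Injective i' := IsLocalizedModule.map_injective S _ _ i hi
      have hf' : Surjective f' := IsLocalizedModule.map_surjective S _ _ f hf
      have he' : Exact i' f' := IsLocalizedModule.map_exact S _ _ _ i f he
      have hinj := LinearMap.lTensor_injective_of_exact_of_flat f' hf' i' hi' he' (B ⧸ Q)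
      rw [hh_quot_inj] at hinj
      apply hinj
      have : i' (LocalizedModule.mkLinearMap S K z) = LocalizedModule.mkLinearMap S F (i z) :=
        IsLocalizedModule.map_apply S _ _ i z
      rw [this]
      have h3 : LocalizedModule.mkLinearMap S F (i z) ∈
        (Q • (⊤ : Submodule B F)).map (LocalizedModule.mkLinearMap S F) := ⟨_, hz, rfl⟩
      rw [Submodule.map_smul''] at h3
      exact Submodule.smul_mono le_rfl le_top h3
  have hall : ∀ (N : Type) [AddCommGroup N] [Module B N] [hN : Module.Finite B N],
      Injective (i.lTensor N) := by
    intro N _ _ hN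
    induction hN using IsNoetherianRing.induction_on_isQuotientEquivQuotientPrime B with
    | subsingleton N => exact injective_of_subsingleton _
    | quotient N p e =>
      exact hh_T3 i e.toLinearMap e.injective (hprime p.1)
    | exact N₁ N₂ N₃ j g hj hg hjg h₁ h₃ => exact hh_T2 i j g hj hjg hg h₁ h₃
  exact hh_T1 i f he hf fun I => hall _

theorem hh_D {B : Type} [CommRing B] [IsNoetherianRing B] [IsLocalRing B] (n : ℕ) :
    ∀ (M : Type) [AddCommGroup M] [Module B M], hhFD B n M → 
    (∀ rs : List B, (∀ r ∈ rs, r ∈ maximalIdeal B) → IsWeaklyRegular B rs →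
      IsWeaklyRegular M rs) →
    (∀ (Q : Ideal B) [Q.IsPrime], Q ≠ maximalIdeal B →
      Module.Flat B (LocalizedModule Q.primeCompl M)) → Module.Flat B M := by
  induction n with
  | zero => intro M _ _ h _ _; exact h
  | succ n ih =>
    rintro M _ _ ⟨K, F, _, _, _, _, i, f, hF, hi, he, hf, hK⟩ hreg hloc
    have : Module.Flat B K := by
      refine ih K hK ?_ ?_
      · intro rs h1 h2
        exact hh_reg_ker' rs i f hi he hf (hreg rs h1 h2) (hh_flat_reg h2)
      · intro Q _ hQ
        have := hloc Q hQ
        let S := Q.primeCompl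
        let i' : LocalizedModule S K →ₗ[B] LocalizedModule S F :=
          IsLocalizedModule.map S (LocalizedModule.mkLinearMap S K) (LocalizedModule.mkLinearMap S F) i
        let f' : LocalizedModule S F →ₗ[B] LocalizedModule S M :=
          IsLocalizedModule.map S (LocalizedModule.mkLinearMap S F) (LocalizedModule.mkLinearMap S M) f
        have hi' : Injective i' := IsLocalizedModule.map_injective S _ _ i hi
        have hf' : Surjective f' := IsLocalizedModule.map_surjective S _ _ f hf
        have he' : Exact i' f' := IsLocalizedModule.map_exact S _ _ _ i f he
        have : Module.Flat B (LocalizedModule S F) := by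
          have h1 : Module.Flat (Localization S) (LocalizedModule S F) :=
            Module.Flat.localizedModule S
          have h2 : Module.Flat B (Localization S) := IsLocalization.flat _ S
          exact Module.Flat.trans B (Localization S) _
        exact hh_flat_ker i' f' hi' he' hf'
    exact hh_D_step i f hi he hf hreg hloc

end Part3


section Part4
open Function RingTheory.Sequence

/-- lists in the maximal ideal, weakly regular on B -/
def hhG {B : Type} [CommRing B] [IsLocalRing B] (l : List B) : Prop :=
  (∀ r ∈ l, r ∈ maximalIdeal B) ∧ IsWeaklyRegular B l

section
set_option linter.unusedSectionVars false
variable {B : Type} [CommRing B] [IsLocalRing B]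

theorem hhG.perm [IsNoetherianRing B] {l l' : List B} (h : hhG l) (hp : l.Perm l') : hhG l' :=
  ⟨fun r hr => h.1 r (hp.mem_iff.mpr hr),
    IsLocalRing.isWeaklyRegular_of_perm_of_subset_maximalIdeal h.2 hp h.1⟩

theorem hh_last {M : Type} [AddCommGroup M] [Module B M] {l : List B} {c : B}
    (h : IsWeaklyRegular M (l ++ [c])) (x : M)
    (hx : c • x ∈ Ideal.ofList l • (⊤ : Submodule B M)) :
    x ∈ Ideal.ofList l • (⊤ : Submodule B M) := by
  rw [isWeaklyRegular_append_iff, isWeaklyRegular_singleton_iff] at h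
  exact mem_of_isSMulRegular_quotient_of_smul_mem h.2 hx

theorem hhG.pow_cons [IsNoetherianRing B] {l : List B} {a : B} (h : hhG (a :: l)) {k : ℕ}
    (hk : 0 < k) : hhG (a ^ k :: l) := by
  have h1 : hhG (l ++ [a]) := h.perm (List.perm_append_singleton a l).symm
  have h2 : hhG (l ++ [a ^ k]) := by
    refine ⟨fun r hr => ?_, ?_⟩
    · rcases List.mem_append.mp hr with h | h
      · exact h1.1 r (List.mem_append_left _ h)
      · rw [List.mem_singleton.mp h]
        exact Ideal.pow_mem_of_mem _ (h1.1 a (by simp)) _ hk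
    · have := h1.2
      rw [isWeaklyRegular_append_iff, isWeaklyRegular_singleton_iff] at this ⊢
      exact ⟨this.1, this.2.pow k⟩
  exact h2.perm (List.perm_append_singleton _ l)

theorem hhG.pow_map [IsNoetherianRing B] {k : ℕ} (hk : 0 < k) (l : List B) :
    ∀ {C : List B}, hhG (l ++ C) → hhG (l.map (· ^ k) ++ C) := by
  induction l with
  | nil => intro C h; exact h
  | cons a l ih =>
    intro C h
    have h1 : hhG (l ++ (a :: C)) := h.perm (List.perm_middle).symm
    have h2 := (ih h1).perm List.perm_middle
    exact h2.pow_cons hk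

theorem hhG.left {l C : List B} (h : hhG (l ++ C)) : hhG l :=
  ⟨fun r hr => h.1 r (List.mem_append_left _ hr), ((isWeaklyRegular_append_iff _ _ _).mp h.2).1⟩

theorem hh_ofList_middle (l C : List B) (c : B) :
    Ideal.ofList (l ++ c :: C) = Ideal.span {c} ⊔ Ideal.ofList (l ++ C) := by
  simp only [Ideal.ofList_append, Ideal.ofList_cons, sup_left_comm]

theorem hh_prod_smul {M : Type} [AddCommGroup M] [Module B M] (as C : List B) {q q' : ℕ}
    (hq : q' ≤ q) (x : M)
    (hx : x ∈ Ideal.ofList (as.map (· ^ q') ++ C) • (⊤ : Submodule B M)) :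
    as.prod ^ (q - q') • x ∈ Ideal.ofList (as.map (· ^ q) ++ C) • (⊤ : Submodule B M) := by
  have key : Ideal.ofList (as.map (· ^ q') ++ C) ≤
      Submodule.comap (LinearMap.mulLeft B (as.prod ^ (q - q')))
        (Ideal.ofList (as.map (· ^ q) ++ C)) := by
    refine Ideal.span_le.mpr ?_
    intro r hr
    change as.prod ^ (q - q') * r ∈ Ideal.ofList (as.map (· ^ q) ++ C)
    rcases List.mem_append.mp hr with h | h
    · obtain ⟨a, ha, rfl⟩ := List.mem_map.mp h
      have h1 : a ^ q ∈ Ideal.ofList (as.map (· ^ q) ++ C) :=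
        Ideal.subset_span (List.mem_append_left _ (List.mem_map.mpr ⟨a, ha, rfl⟩))
      obtain ⟨b, hb⟩ := List.dvd_prod ha
      have : as.prod ^ (q - q') * a ^ q' = b ^ (q - q') * a ^ q := by
        rw [hb, mul_pow, mul_assoc, mul_comm (b ^ _), ← mul_assoc, ← pow_add, Nat.sub_add_cancel hq,
          mul_comm]
      simp only [this]
      exact Ideal.mul_mem_left _ _ h1
    · exact Ideal.mul_mem_left _ _ (Ideal.subset_span (List.mem_append_right _ h))
  induction hx using Submodule.smul_induction_on' with
  | smul r hr n hn =>
    rw [← mul_smul]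
    exact Submodule.smul_mem_smul (key hr) trivial
  | add x hx y hy h1 h2 =>
    rw [smul_add]; exact add_mem h1 h2

theorem hh_mem_ofList {M : Type} [AddCommGroup M] [Module B M] (S : Submodule B M) (l : List B) :
    ∀ x : M, x ∈ Ideal.ofList l • S ↔ ∃ s : Fin l.length → M, (∀ i, s i ∈ S) ∧
      x = ∑ i, l.get i • s i := by
  induction l with
  | nil => intro x; simp
  | cons a l ih =>
    intro x
    rw [Ideal.ofList_cons, Submodule.sup_smul, Submodule.mem_sup]
    constructor
    · rintro ⟨y, hy, z, hz, rfl⟩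
      rw [Submodule.ideal_span_singleton_smul] at hy
      obtain ⟨y, hy, rfl⟩ := hy
      obtain ⟨s, hs, rfl⟩ := (ih z).mp hz
      refine ⟨Fin.cons y s, ?_, ?_⟩
      · intro i
        refine Fin.cases ?_ ?_ i
        · exact hy
        · intro j; exact hs j
      · exact (Fin.sum_univ_succ (n := l.length) (fun i => (a :: l).get i •
          (Fin.cons y s : Fin (l.length + 1) → M) i)).symm
    · rintro ⟨s, hs, rfl⟩
      refine ⟨a • s ⟨0, by simp⟩, Submodule.smul_mem_smul (Ideal.mem_span_singleton_self a) (hs _),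
        ∑ i : Fin l.length, l.get i • s (Fin.succ i), (ih _).mpr ⟨_, fun i => hs _, rfl⟩, ?_⟩
      exact (Fin.sum_univ_succ (n := l.length) (fun i => (a :: l).get i • s i)).symm
end

def hhPF (B Ω : Type) [CommRing B] [IsLocalRing B] [CommRing Ω] [Algebra B Ω] : Prop :=
  ∀ S : Submodule B Ω, S.FG → ∀ t ∈ maximalIdeal B, ∃ (N r : ℕ) (φ : S →ₗ[B] (Fin r → B))
    (ψ : (Fin r → B) →ₗ[B] Ω), ∀ s : S, ψ (φ s) = t ^ (N + 1) • (s : Ω)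

theorem hh_chain {B Ω : Type} [CommRing B] [IsLocalRing B] [IsNoetherianRing B] [CommRing Ω]
    [Algebra B Ω] (hPF : hhPF B Ω) (n : ℕ)
    (HΩ : ∀ l : List B, hhG l → l.length ≤ n → IsWeaklyRegular Ω l) (as : List B) :
    ∀ (C : List B) (t : B) (S : Submodule B Ω), S.FG → hhG (t :: (as ++ C)) →
      as.length + C.length ≤ n → ∃ W : Submodule B Ω, W.FG ∧ ∃ L : ℕ → Submodule B (Ω × Ω),
      (∀ q > 0, ∀ v ∈ S, t ^ q • v ∈ Ideal.ofList (as.map (· ^ q) ++ C) • S →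
        ∃ w ∈ W, (v, w) ∈ L q) ∧
      (∀ q > 0, ∀ v, (v, 0) ∈ L q →
        v ∈ Ideal.ofList (as.map (· ^ q) ++ C) • (⊤ : Submodule B Ω)) ∧
      (∀ q q', q' ≤ q → ∀ v w, (v, w) ∈ L q' → (as.prod ^ (q - q') • v, w) ∈ L q) := by
  induction as with
  | nil =>
    intro C t S hS hG hlen
    refine ⟨S, hS, fun _ => (Ideal.ofList C • (⊤ : Submodule B Ω)).comap
      (LinearMap.fst B Ω Ω - LinearMap.snd B Ω Ω), ?_, ?_, ?_⟩
    · intro q hq v hv _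
      exact ⟨v, hv, by simp⟩
    · intro q hq v hv
      simpa using hv
    · intro q q' _ v w h
      simpa using h
  | cons a as ih =>
    intro C t S hS hG hlen
    obtain ⟨N, r, φ, ψ, hφψ⟩ := hPF S hS t (hG.1 t (by simp))
    set c := t ^ (N + 1) with hc
    let S' : Submodule B Ω := LinearMap.range ψ ⊔ S
    have hS' : S'.FG := Submodule.FG.sup (by
      rw [LinearMap.range_eq_map]; exact (Module.Finite.fg_top).map ψ) hS
    have hG' : hhG (a :: (as ++ (c :: C))) := by
      have h1 : hhG (c :: (a :: as ++ C)) := hG.pow_cons (Nat.succ_pos N)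
      refine h1.perm ?_
      rw [List.cons_append]
      refine (List.Perm.swap a c _).trans ?_
      exact (List.perm_middle.symm).cons a
    obtain ⟨W, hW, L, h1, h2, h3⟩ := ih (c :: C) a S' hS' hG' (by
      simp only [List.length_cons] at hlen ⊢; omega)
    let D : ℕ → Submodule B Ω := fun q => Ideal.ofList (as.map (· ^ q) ++ C) • (⊤ : Submodule B Ω)
    refine ⟨W, hW, fun q => 
      { carrier := {vw | ∃ f, (f, vw.2) ∈ L q ∧ c • vw.1 - a ^ q • f ∈ D q}
        add_mem' := ?_
        zero_mem' := ⟨0, by simp [← Prod.zero_eq_mk], by simp⟩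
        smul_mem' := ?_ }, ?_, ?_, ?_⟩
    · rintro ⟨v, w⟩ ⟨v', w'⟩ ⟨f, hf, hf'⟩ ⟨g, hg, hg'⟩
      refine ⟨f + g, (L q).add_mem hf hg, ?_⟩
      have := (D q).add_mem hf' hg'
      convert this using 1
      simp only [Prod.fst_add, smul_add]; abel
    · rintro b ⟨v, w⟩ ⟨f, hf, hf'⟩
      refine ⟨b • f, (L q).smul_mem b hf, ?_⟩
      have := (D q).smul_mem b hf'
      convert this using 1
      simp only [Prod.smul_fst, smul_sub]
      rw [smul_comm c b, smul_comm (a^q) b]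
    · intro q hq v hv htv
      -- apply φ
      have hφ : φ ⟨v, hv⟩ ∈ Ideal.ofList ((a :: as).map (· ^ q) ++ C) •
          (⊤ : Submodule B (Fin r → B)) := by
        have hreg : IsWeaklyRegular (Fin r → B) (((a :: as).map (· ^ q) ++ C) ++ [t ^ q]) := by
          apply hh_flat_reg
          have e2 : hhG (t ^ q :: ((a :: as).map (· ^ q) ++ C)) := by
            simpa using hhG.pow_map hq (t :: a :: as) (C := C) (by simpa using hG)
          exact (e2.perm (List.perm_append_singleton _ _).symm).2
        apply hh_last hreg
        rw [← map_smul]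
        have hS1 : t ^ q • (⟨v, hv⟩ : S) ∈ Ideal.ofList ((a :: as).map (· ^ q) ++ C) •
          (⊤ : Submodule B S) := by
          have : (Ideal.ofList ((a :: as).map (· ^ q) ++ C) • (⊤ : Submodule B S)).map S.subtype
            = Ideal.ofList ((a :: as).map (· ^ q) ++ C) • S := by
            rw [Submodule.map_smul'', Submodule.map_subtype_top]
          rw [← this] at htv
          obtain ⟨y, hy, hyv⟩ := htv
          have : y = t ^ q • (⟨v, hv⟩ : S) := Subtype.ext hyv
          rwa [← this]
        have := Submodule.mem_map_of_mem (f := φ) hS1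
        rw [Submodule.map_smul''] at this
        exact Submodule.smul_mono le_rfl le_top this
      have hcv : c • v ∈ Ideal.ofList ((a :: as).map (· ^ q) ++ C) • LinearMap.range ψ := by
        have := Submodule.mem_map_of_mem (f := ψ) hφ
        rw [Submodule.map_smul'', hφψ, Submodule.map_top] at this
        exact this
      rw [List.map_cons, List.cons_append, Ideal.ofList_cons, Submodule.sup_smul,
        Submodule.mem_sup] at hcv
      obtain ⟨y, hy, z, hz, hyz⟩ := hcv
      rw [Submodule.ideal_span_singleton_smul] at hy
      obtain ⟨f, hf, rfl⟩ := hy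
      change a ^ q • f + z = c • v at hyz
      obtain ⟨w, hw, hwL⟩ := h1 q hq f (Submodule.mem_sup_left hf) (by
        have e : a ^ q • f = c • v - z := by rw [← hyz]; abel
        rw [e, hh_ofList_middle, Submodule.sup_smul]
        refine sub_mem (Submodule.mem_sup_left ?_) (Submodule.mem_sup_right ?_)
        · exact Submodule.smul_mem_smul (Ideal.mem_span_singleton_self c)
            (Submodule.mem_sup_right hv)
        · exact Submodule.smul_mono le_rfl le_sup_left hz)
      refine ⟨w, hw, f, hwL, ?_⟩
      have : c • v - a ^ q • f = z := by rw [← hyz]; abel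
      change c • v - a ^ q • f ∈ D q
      rw [this]
      exact Submodule.smul_mono le_rfl le_top hz
    · rintro q hq v ⟨f, hf, hf'⟩
      have hf2 := h2 q hq f hf
      change c • v - a ^ q • f ∈ D q at hf'
      rw [hh_ofList_middle, Submodule.sup_smul, Submodule.mem_sup] at hf2
      obtain ⟨y, hy, h, hh, rfl⟩ := hf2
      rw [Submodule.ideal_span_singleton_smul] at hy
      obtain ⟨g, -, rfl⟩ := hy
      change c • v - a ^ q • (c • g + h) ∈ D q at hf'
      have hreg : IsWeaklyRegular Ω ((as.map (· ^ q) ++ C) ++ [c]) := by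
        refine HΩ _ ?_ ?_
        · have e1 : hhG (as ++ (c :: C)) := by
            have : hhG ((as ++ (c :: C)) ++ [a]) := hG'.perm (List.perm_append_singleton _ _).symm
            exact this.left
          refine (hhG.pow_map hq as e1).perm ?_
          refine List.perm_middle.trans ?_
          exact (List.perm_append_singleton _ _).symm
        · simp only [List.length_append, List.length_map, List.length_cons, List.length_nil] at hlen ⊢
          omega
      have hkey : v - a ^ q • g ∈ D q := by
        apply hh_last hreg
        have : c • (v - a ^ q • g) = (c • v - a ^ q • (c • g + h)) + a ^ q • h := by
          rw [smul_sub, smul_add, smul_comm c (a ^ q) g]; abel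
        rw [this]
        exact add_mem hf' (Submodule.smul_mem _ _ hh)
      rw [List.map_cons, List.cons_append, Ideal.ofList_cons, Submodule.sup_smul]
      have : v = a ^ q • g + (v - a ^ q • g) := by abel
      rw [this]
      exact Submodule.add_mem_sup
        (Submodule.smul_mem_smul (Ideal.mem_span_singleton_self _) trivial) hkey
    · rintro q q' hqq v w ⟨f, hf, hf'⟩
      refine ⟨as.prod ^ (q - q') • f, h3 q q' hqq f w hf, ?_⟩
      change c • (v) - a ^ q' • f ∈ D q' at hf'
      change c • ((a :: as).prod ^ (q - q') • v) - a ^ q • (as.prod ^ (q - q') • f) ∈ D q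
      have e : c • ((a :: as).prod ^ (q - q') • v) - a ^ q • (as.prod ^ (q - q') • f) =
          a ^ (q - q') • as.prod ^ (q - q') • (c • v - a ^ q' • f) := by
        have : a ^ q = a ^ (q - q') * a ^ q' := by rw [← pow_add]; congr 1; omega
        rw [this, List.prod_cons, mul_pow]
        simp only [smul_sub, ← mul_smul]
        congr 2 <;> ring
      rw [e]
      exact Submodule.smul_mem _ _ (hh_prod_smul as C hqq _ hf')
end Part4


section Part5
open Function RingTheory.Sequence Polynomial

theorem hh_root {Ω 𝕂 : Type} [CommRing Ω] [IsDomain Ω] [IsIntegrallyClosed Ω] [Field 𝕂]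
    [Algebra Ω 𝕂] [IsFractionRing Ω 𝕂] [IsAlgClosed 𝕂] (f : Polynomial Ω) (hf : f.Monic)
    (hd : f.degree ≠ 0) : ∃ z : Ω, f.eval z = 0 := by
  have hinj : Injective (algebraMap Ω 𝕂) := IsFractionRing.injective Ω 𝕂
  obtain ⟨x, hx⟩ := IsAlgClosed.exists_aeval_eq_zero_of_injective 𝕂 hinj f hd
  obtain ⟨z, rfl⟩ := IsIntegrallyClosed.isIntegral_iff.mp (⟨f, hf, hx⟩ : IsIntegral Ω x)
  refine ⟨z, hinj ?_⟩
  rw [aeval_algebraMap_apply] at hx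
  rw [map_zero, ← hx]; rfl

theorem hh_deg {Ω : Type} [CommRing Ω] {p : ℕ} (hp : 1 < p) (e : ℕ) (γ : ℕ → Ω) :
    (∑ j ∈ Finset.range e, C (γ j) * X ^ (p ^ j) : Polynomial Ω).degree < (p ^ e : ℕ) := by
  refine (degree_sum_le _ _).trans_lt ?_
  rw [Finset.sup_lt_iff (WithBot.bot_lt_coe _)]
  intro j hj
  refine (degree_C_mul_X_pow_le _ _).trans_lt ?_
  exact_mod_cast Nat.pow_lt_pow_right hp (Finset.mem_range.mp hj)

theorem hh_eqn {Ω 𝕂 : Type} [CommRing Ω] [IsDomain Ω] [IsIntegrallyClosed Ω] [Field 𝕂]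
    [Algebra Ω 𝕂] [IsFractionRing Ω 𝕂] [IsAlgClosed 𝕂] (p : ℕ) [hp : Fact p.Prime] [CharP Ω p]
    {ι : Type} [Fintype ι] [DecidableEq ι] [hι : Nonempty ι] (a s : ι → Ω) (v : Ω) (e : ℕ) (β : ℕ → Ω)
    (h : v ^ (p ^ e) - ∑ j ∈ Finset.range e, β j * (∏ i, a i) ^ (p ^ e - p ^ j) * v ^ (p ^ j) =
      ∑ i, a i ^ (p ^ e) * s i) : ∃ z : ι → Ω, v = ∑ i, a i * z i := by
  have hp1 : 1 < p := hp.out.one_lt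
  set P := ∏ i, a i with hP
  -- the additive operator
  let θ : Ω → Ω →+ Ω := fun c => 
    { toFun := fun v => v ^ (p ^ e) - ∑ j ∈ Finset.range e, β j * c ^ (p ^ e - p ^ j) * v ^ (p ^ j)
      map_zero' := by
        have : ∀ j, (0 : Ω) ^ (p ^ j) = 0 := fun j => zero_pow (pow_ne_zero _ hp.out.ne_zero)
        simp [this]
      map_add' := by
        intro x y
        simp only [add_pow_char_pow, mul_add, Finset.sum_add_distrib]
        ring }
  have hz : ∀ (c s : Ω), ∃ z, θ c z = s := by
    intro c s
    let f : Polynomial Ω := X ^ (p ^ e) + (- (∑ j ∈ Finset.range e, C (β j * c ^ (p ^ e - p ^ j)) * X ^ (p ^ j)) - C s)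
    have hdeg : (- (∑ j ∈ Finset.range e, C (β j * c ^ (p ^ e - p ^ j)) * X ^ (p ^ j)) - C s : Polynomial Ω).degree
        < (p ^ e : ℕ) := by
      refine (degree_sub_le _ _).trans_lt (max_lt ?_ ?_)
      · rw [degree_neg]; exact hh_deg hp1 e _
      · refine degree_C_le.trans_lt ?_
        exact_mod_cast Nat.pow_pos hp.out.pos
    have hm : f.Monic := monic_X_pow_add hdeg
    have hfd : f.degree ≠ 0 := by
      have : f.degree = (p ^ e : ℕ) := by
        rw [show f = _ from rfl, degree_add_eq_left_of_degree_lt, degree_X_pow]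
        rwa [degree_X_pow]
      rw [this]
      exact_mod_cast (pow_ne_zero _ hp.out.ne_zero)
    obtain ⟨z, hz⟩ := hh_root (𝕂 := 𝕂) f hm hfd
    refine ⟨z, ?_⟩
    change z ^ (p ^ e) - ∑ j ∈ Finset.range e, β j * c ^ (p ^ e - p ^ j) * z ^ (p ^ j) = s
    simp only [f, eval_add, eval_sub, eval_neg, eval_pow, eval_X, eval_C, eval_finsetSum,
      eval_mul] at hz
    linear_combination hz
  choose z hz using fun i => hz (∏ l ∈ Finset.univ.erase i, a l) (s i)
  have hai : ∀ i, θ P (a i * z i) = a i ^ (p ^ e) * s i := by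
    intro i
    rw [← hz i]
    have hPi : P = a i * ∏ l ∈ Finset.univ.erase i, a l :=
      (Finset.mul_prod_erase _ _ (Finset.mem_univ i)).symm
    change (a i * z i) ^ (p ^ e) - ∑ j ∈ Finset.range e, β j * P ^ (p ^ e - p ^ j) * (a i * z i) ^ (p ^ j)
      = a i ^ (p ^ e) * (z i ^ (p ^ e) - ∑ j ∈ Finset.range e, β j * 
        (∏ l ∈ Finset.univ.erase i, a l) ^ (p ^ e - p ^ j) * z i ^ (p ^ j))
    rw [mul_sub, Finset.mul_sum, mul_pow]
    congr 1
    refine Finset.sum_congr rfl fun j hj => ?_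
    have hle : p ^ j ≤ p ^ e := Nat.pow_le_pow_right hp.out.pos (Finset.mem_range.mp hj).le
    have : a i ^ (p ^ e) = a i ^ (p ^ e - p ^ j) * a i ^ (p ^ j) := by
      rw [← pow_add, Nat.sub_add_cancel hle]
    rw [this, hPi, mul_pow, mul_pow]; ring
  have hw : θ P (v - ∑ i, a i * z i) = 0 := by
    rw [map_sub, map_sum, Finset.sum_congr rfl (fun i _ => hai i)]
    exact sub_eq_zero.mpr h
  set w := v - ∑ i, a i * z i with hwdef
  change w ^ (p ^ e) - ∑ j ∈ Finset.range e, β j * P ^ (p ^ e - p ^ j) * w ^ (p ^ j) = 0 at hw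
  suffices ∃ r, w = P * r by
    obtain ⟨r, hr⟩ := this
    · obtain ⟨i₀⟩ := hι
      refine ⟨fun i => z i + if i = i₀ then (∏ l ∈ Finset.univ.erase i₀, a l) * r else 0, ?_⟩
      simp only [mul_add, Finset.sum_add_distrib, mul_ite, mul_zero, Finset.sum_ite_eq',
        Finset.mem_univ, if_true]
      rw [← mul_assoc, Finset.mul_prod_erase _ _ (Finset.mem_univ i₀), ← hP, ← hr, hwdef]
      ring
  by_cases hP0 : P = 0
  · refine ⟨0, ?_⟩
    rw [mul_zero]
    rw [Finset.sum_eq_zero, sub_zero] at hw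
    · exact pow_eq_zero_iff (pow_ne_zero _ hp.out.ne_zero) |>.mp hw
    · intro j hj
      have : p ^ j < p ^ e := Nat.pow_lt_pow_right hp1 (Finset.mem_range.mp hj)
      rw [hP0, zero_pow (by omega)]; simp
  · have hinj : Injective (algebraMap Ω 𝕂) := IsFractionRing.injective Ω 𝕂
    have hP0' : algebraMap Ω 𝕂 P ≠ 0 := fun h => hP0 (hinj (by simpa using h))
    let f : Polynomial Ω := X ^ (p ^ e) + (- (∑ j ∈ Finset.range e, C (β j) * X ^ (p ^ j)))
    have hm : f.Monic := monic_X_pow_add (by rw [degree_neg]; exact hh_deg hp1 e _)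
    have hint : IsIntegral Ω (algebraMap Ω 𝕂 w / algebraMap Ω 𝕂 P) := by
      refine ⟨f, hm, ?_⟩
      have := congrArg (algebraMap Ω 𝕂) hw
      simp only [map_sub, map_sum, map_mul, map_pow, map_zero] at this
      simp only [f, eval₂_add, eval₂_neg, eval₂_pow, eval₂_X, eval₂_finsetSum, eval₂_mul, eval₂_C]
      have h2 : ∀ j ∈ Finset.range e, algebraMap Ω 𝕂 (β j) * (algebraMap Ω 𝕂 w / algebraMap Ω 𝕂 P) ^ (p ^ j)
        = (algebraMap Ω 𝕂 (β j) * algebraMap Ω 𝕂 P ^ (p ^ e - p ^ j) * algebraMap Ω 𝕂 w ^ (p ^ j))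
          / algebraMap Ω 𝕂 P ^ (p ^ e) := by
        intro j hj
        have hle : p ^ j ≤ p ^ e := Nat.pow_le_pow_right hp.out.pos (Finset.mem_range.mp hj).le
        have : algebraMap Ω 𝕂 P ^ (p ^ e) = algebraMap Ω 𝕂 P ^ (p ^ e - p ^ j) * algebraMap Ω 𝕂 P ^ (p ^ j) := by
          rw [← pow_add, Nat.sub_add_cancel hle]
        rw [this, div_pow]
        field_simp
      rw [Finset.sum_congr rfl h2, ← Finset.sum_div, div_pow, ← sub_eq_add_neg, ← sub_div, this,
        zero_div]
    obtain ⟨r, hr⟩ := IsIntegrallyClosed.isIntegral_iff.mp hint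
    refine ⟨r, hinj ?_⟩
    rw [map_mul, hr]
    field_simp

theorem hh_noeth {B M : Type} [CommRing B] [IsNoetherianRing B] [AddCommGroup M] [Module B M]
    (W : Submodule B M) (hW : W.FG) (w : ℕ → M) (hw : ∀ e, w e ∈ W) :
    ∃ e, ∃ β : ℕ → B, w e = ∑ j ∈ Finset.range e, β j • w j := by
  have : IsNoetherian B W := isNoetherian_of_fg_of_noetherian W hW
  let f : ℕ →o Submodule B W := 
    ⟨fun e => Submodule.span B ((fun j => (⟨w j, hw j⟩ : W)) '' (Finset.range e : Set ℕ)),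
      fun a b hab => Submodule.span_mono (Set.image_mono (by
        intro x hx; simp at hx ⊢; omega))⟩
  obtain ⟨e, he⟩ := monotone_stabilizes_iff_noetherian.mpr this f
  have h1 : (⟨w e, hw e⟩ : W) ∈ f (e + 1) := Submodule.subset_span ⟨e, by simp, rfl⟩
  rw [← he (e + 1) (by omega)] at h1
  change _ ∈ Submodule.span B ((fun j => (⟨w j, hw j⟩ : W)) '' (Finset.range e : Set ℕ)) at h1
  rw [Submodule.mem_span_image_finset_iff_exists_fun] at h1
  obtain ⟨c, hc⟩ := h1
  refine ⟨e, fun j => if h : j ∈ Finset.range e then c ⟨j, h⟩ else 0, ?_⟩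
  have := congrArg Subtype.val hc
  rw [← Finset.sum_coe_sort (Finset.range e)]
  simp only [AddSubmonoidClass.coe_finsetSum, Submodule.coe_smul] at this
  rw [← this]
  refine Finset.sum_congr rfl fun i _ => ?_
  simp only [i.2, dif_pos]
end Part5


section Part6
open Function RingTheory.Sequence

theorem hh_frob {B Ω : Type} [CommRing B] [CommRing Ω] [Algebra B Ω] (p : ℕ) [hp : Fact p.Prime]
    [CharP Ω p] (e : ℕ) (S : Subalgebra B Ω) (l : List B) :
    ∀ x ∈ Ideal.ofList l • Subalgebra.toSubmodule S,
      x ^ (p ^ e) ∈ Ideal.ofList (l.map (· ^ (p ^ e))) • Subalgebra.toSubmodule S := by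
  induction l with
  | nil =>
    intro x hx
    simp only [Ideal.ofList_nil, Submodule.bot_smul, Submodule.mem_bot, List.map_nil] at hx ⊢
    rw [hx, zero_pow (pow_ne_zero _ hp.out.ne_zero)]
  | cons a l ih =>
    intro x hx
    rw [Ideal.ofList_cons, Submodule.sup_smul, Submodule.mem_sup] at hx
    obtain ⟨y, hy, z, hz, rfl⟩ := hx
    rw [Submodule.ideal_span_singleton_smul] at hy
    obtain ⟨y, hy, rfl⟩ := hy
    change (a • y + z) ^ (p ^ e) ∈ _
    rw [add_pow_char_pow, List.map_cons, Ideal.ofList_cons, Submodule.sup_smul, smul_pow]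
    exact Submodule.add_mem_sup (Submodule.smul_mem_smul (Ideal.mem_span_singleton_self _)
      (S.pow_mem hy _)) (ih z hz)

theorem hh_reg_step {B Ω 𝕂 : Type} [CommRing B] [IsLocalRing B] [IsNoetherianRing B] [CommRing Ω]
    [Algebra B Ω] [IsDomain Ω] [IsIntegrallyClosed Ω] [Field 𝕂]
    [Algebra Ω 𝕂] [IsFractionRing Ω 𝕂] [IsAlgClosed 𝕂] (p : ℕ) [hp : Fact p.Prime] [CharP Ω p]
    [Algebra.IsIntegral B Ω] (hPF : hhPF B Ω) (n : ℕ)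
    (HΩ : ∀ l : List B, hhG l → l.length ≤ n → IsWeaklyRegular Ω l) (rs : List B) (b : B)
    (hne : rs ≠ []) (hlen : rs.length ≤ n) (hG : hhG (b :: rs)) (v : Ω)
    (hv : b • v ∈ Ideal.ofList rs • (⊤ : Submodule B Ω)) :
    v ∈ Ideal.ofList rs • (⊤ : Submodule B Ω) := by
  classical
  obtain ⟨s, -, hs⟩ := (hh_mem_ofList _ rs _).mp hv
  let T : Set Ω := insert v (Set.range s)
  have hT : T.Finite := (Set.finite_range s).insert v
  let S : Subalgebra B Ω := Algebra.adjoin B T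
  have hSfg : (Subalgebra.toSubmodule S).FG :=
    fg_adjoin_of_finite hT fun x _ => Algebra.IsIntegral.isIntegral x
  have hvS : v ∈ S := Algebra.subset_adjoin (Set.mem_insert _ _)
  have hsS : ∀ i, s i ∈ S := fun i => Algebra.subset_adjoin (Set.mem_insert_of_mem _ ⟨i, rfl⟩)
  have hbv : b • v ∈ Ideal.ofList rs • Subalgebra.toSubmodule S :=
    (hh_mem_ofList _ rs _).mpr ⟨s, hsS, hs⟩
  obtain ⟨W, hW, L, h1, h2, h3⟩ := hh_chain hPF n HΩ rs [] b (Subalgebra.toSubmodule S) hSfg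
    (by simpa using hG) (by simpa using hlen)
  simp only [List.append_nil] at h1 h2
  have hpos : ∀ e, 0 < p ^ e := fun e => Nat.pow_pos hp.out.pos
  have hex : ∀ e, ∃ w ∈ W, (v ^ (p ^ e), w) ∈ L (p ^ e) := by
    intro e
    refine h1 (p ^ e) (hpos e) _ (S.pow_mem hvS _) ?_
    rw [← smul_pow]
    exact hh_frob p e S rs _ hbv
  choose w hwW hwL using hex
  obtain ⟨e, β, hβ⟩ := hh_noeth W hW w hwW
  have hmem : (v ^ (p ^ e) - ∑ j ∈ Finset.range e, β j • (rs.prod ^ (p ^ e - p ^ j) • v ^ (p ^ j)), 0)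
      ∈ L (p ^ e) := by
    have h4 : ∑ j ∈ Finset.range e, β j • ((rs.prod ^ (p ^ e - p ^ j) • v ^ (p ^ j), w j) : Ω × Ω)
        ∈ L (p ^ e) := by
      refine sum_mem fun j hj => Submodule.smul_mem _ _ ?_
      exact h3 _ _ (Nat.pow_le_pow_right hp.out.pos (Finset.mem_range.mp hj).le) _ _ (hwL j)
    have h5 := sub_mem (hwL e) h4
    convert h5 using 1
    ext
    · simp [Prod.fst_sum]
    · simp [Prod.snd_sum, ← hβ]
  have h6 := h2 (p ^ e) (hpos e) _ hmem
  obtain ⟨s', -, hs'⟩ := (hh_mem_ofList _ _ _).mp h6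
  have hl : (rs.map (· ^ (p ^ e))).length = rs.length := List.length_map _
  have : Nonempty (Fin rs.length) := ⟨⟨0, List.length_pos_iff.mpr hne⟩⟩
  obtain ⟨z, hz⟩ := hh_eqn (𝕂 := 𝕂) p (fun i : Fin rs.length => algebraMap B Ω (rs.get i))
    (fun i => s' (Fin.cast hl.symm i)) v e (fun j => algebraMap B Ω (β j)) (by
      have hprod : ∏ i : Fin rs.length, algebraMap B Ω (rs.get i) = algebraMap B Ω rs.prod := by
        rw [← map_prod]; congr 1
        simp [List.get_eq_getElem, Fin.prod_univ_getElem]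
      rw [hprod]
      simp only [Algebra.smul_def, map_pow] at hs'
      rw [Finset.sum_congr rfl fun j _ => mul_assoc _ _ _, hs']
      refine Fintype.sum_equiv (finCongr hl) _ _ ?_
      intro i
      simp)
  rw [hh_mem_ofList]
  exact ⟨z, fun _ => trivial, by rw [hz]; simp [Algebra.smul_def]⟩

theorem hh_reg_Omega {B Ω : Type} (𝕂 : Type) [CommRing B] [IsLocalRing B] [IsNoetherianRing B] [CommRing Ω]
    [Algebra B Ω] [IsDomain Ω] [IsIntegrallyClosed Ω] [Field 𝕂]
    [Algebra Ω 𝕂] [IsFractionRing Ω 𝕂] [IsAlgClosed 𝕂] (p : ℕ) [hp : Fact p.Prime] [CharP Ω p]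
    [Algebra.IsIntegral B Ω] (hinj : Injective (algebraMap B Ω)) (hPF : hhPF B Ω) (n : ℕ) :
    ∀ l : List B, hhG l → l.length ≤ n → IsWeaklyRegular Ω l := by
  induction n with
  | zero =>
    intro l _ hl
    rw [List.length_eq_zero_iff.mp (Nat.le_zero.mp hl)]
    exact IsWeaklyRegular.nil _ _
  | succ n ih =>
    intro l hG hl
    rcases List.eq_nil_or_concat l with rfl | ⟨rs, b, rfl⟩
    · exact IsWeaklyRegular.nil _ _
    rw [List.concat_eq_append] at *
    have hlen : rs.length ≤ n := by simpa using hl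
    rw [isWeaklyRegular_append_iff, isWeaklyRegular_singleton_iff]
    refine ⟨ih rs hG.left hlen, ?_⟩
    rw [isSMulRegular_quotient_iff_mem_of_smul_mem]
    intro v hv
    by_cases hne : rs = []
    · subst hne
      simp only [Ideal.ofList_nil, Submodule.bot_smul, Submodule.mem_bot] at hv ⊢
      have hb : b ≠ 0 := by
        rintro rfl
        have := hG.2
        rw [List.nil_append, isWeaklyRegular_singleton_iff] at this
        exact one_ne_zero (this (by simp : (0 : B) • (1 : B) = (0 : B) • 0))
      rw [Algebra.smul_def, mul_eq_zero] at hv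
      exact hv.resolve_left fun h => hb (hinj (by simpa using h))
    · exact hh_reg_step (𝕂 := 𝕂) p hPF n ih rs b hne hlen
        (hG.perm (List.perm_append_singleton _ _)) v hv
end Part6


section Part7
open Function

theorem hh_PF_of_flat {B Ω : Type} [CommRing B] [IsLocalRing B] [IsNoetherianRing B] [CommRing Ω]
    [Algebra B Ω] [IsDomain Ω] (hinj : Injective (algebraMap B Ω))
    (h : ∀ (Q : Ideal B) [Q.IsPrime], Q ≠ maximalIdeal B →
      Module.Flat B (LocalizedModule Q.primeCompl Ω)) : hhPF B Ω := by
  intro S hS t ht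
  haveI : Module.Finite B S := Module.Finite.iff_fg.mpr hS
  haveI : Module.FinitePresentation B S := Module.finitePresentation_of_finite B S
  let W : Submodule B (S →ₗ[B] Ω) :=
    Submodule.span B (Set.range fun q : (S →ₗ[B] B) × Ω => q.1.smulRight q.2)
  let a : Ideal B := W.comap (LinearMap.toSpanSingleton B (S →ₗ[B] Ω) S.subtype)
  have ha : ∀ c : B, c ∈ a ↔ c • S.subtype ∈ W := fun c => by
    simp [a, Submodule.mem_comap, LinearMap.toSpanSingleton_apply]
  have key : ∀ Q : Ideal B, Q.IsPrime → Q ≠ maximalIdeal B → ∃ c ∈ a, c ∉ Q := by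
    intro Q hQ hne
    haveI := h Q hne
    let g := LocalizedModule.mkLinearMap Q.primeCompl Ω
    obtain ⟨k, h2, h3, h23⟩ := Module.Flat.exists_factorization_of_finitePresentation
      (g ∘ₗ S.subtype)
    obtain ⟨b, hb⟩ := IsLocalizedModule.exist_integer_multiples_of_finite Q.primeCompl g
      (fun i : Fin k => h3 (Finsupp.single i 1))
    choose w hw using hb
    refine ⟨b, (ha b).mpr ?_, b.2⟩
    have hginj : Injective g := by
      rw [← LinearMap.ker_eq_bot, LinearMap.ker_eq_bot']
      intro m hm
      obtain ⟨c, hc⟩ := (IsLocalizedModule.eq_zero_iff Q.primeCompl g).mp hm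
      have hc' : (c : B) • m = 0 := hc
      rw [Algebra.smul_def] at hc'
      rcases mul_eq_zero.mp hc' with h0 | h0
      · exact absurd ((injective_iff_map_eq_zero _).mp hinj _ h0 ▸ Q.zero_mem) c.2
      · exact h0
    have heq : (b : B) • S.subtype = ∑ i : Fin k, ((Finsupp.lapply i) ∘ₗ h2).smulRight (w i) := by
      ext s
      apply hginj
      have e1 : g s = h3 (h2 s) := LinearMap.congr_fun h23 s
      have e2 : h2 s = ∑ i, (h2 s i) • Finsupp.single i (1 : B) := by
        ext j; simp [Finsupp.single_apply, Finsupp.finset_sum_apply]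
      simp only [LinearMap.smul_apply, Submodule.coe_subtype, map_smul, e1, LinearMap.sum_apply,
        LinearMap.smulRight_apply, map_sum, LinearMap.comp_apply, Finsupp.lapply_apply, hw]
      rw [e2, map_sum, Finset.smul_sum]
      refine Finset.sum_congr rfl fun i _ => ?_
      rw [← e2, map_smul, smul_comm]
    rw [heq]
    exact Submodule.sum_mem _ fun i _ => Submodule.subset_span ⟨(_, w i), rfl⟩
  have hrad : t ∈ a.radical := by
    rw [Ideal.radical_eq_sInf, Ideal.mem_sInf]
    rintro J ⟨hJ, hJp⟩
    by_cases hne : J = maximalIdeal B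
    · rw [hne]; exact ht
    · obtain ⟨c, hc, hc'⟩ := key J hJp hne
      exact absurd (hJ hc) hc'
  obtain ⟨N, hN⟩ := hrad
  have h1 : t ^ (N + 1) ∈ a := by rw [pow_succ]; exact Ideal.mul_mem_right _ _ hN
  rw [ha] at h1
  obtain ⟨r, f, q, hq⟩ := Submodule.mem_span_set'.mp h1
  choose q' hq' using fun i => (q i).2
  refine ⟨N, r, LinearMap.pi fun i => f i • (q' i).1, Fintype.linearCombination B fun i => (q' i).2,
    fun s => ?_⟩
  have := LinearMap.congr_fun hq s
  simp only [LinearMap.sum_apply, LinearMap.smul_apply, Submodule.coe_subtype, ← hq',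
    LinearMap.smulRight_apply] at this
  rw [← this]
  simp [Fintype.linearCombination_apply, mul_smul]

end Part7


section Part8
open Function

theorem hh_loc_loc {A B M N : Type} [CommRing A] [CommRing B] [Algebra A B] (P : Ideal A)
    [P.IsPrime] [IsLocalization.AtPrime B P] [AddCommGroup M] [Module A M] [AddCommGroup N]
    [Module A N] [Module B N] [IsScalarTower A B N] (f : M →ₗ[A] N)
    [hf : IsLocalizedModule P.primeCompl f] (Q' : Ideal B) [Q'.IsPrime]
    (h : Module.Flat A (LocalizedModule (Q'.comap (algebraMap A B)).primeCompl M)) :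
    Module.Flat B (LocalizedModule Q'.primeCompl N) := by
  let O := LocalizedModule Q'.primeCompl N
  let C := Localization.AtPrime Q'
  let g : N →ₗ[B] O := LocalizedModule.mkLinearMap Q'.primeCompl N
  haveI : IsScalarTower A B O := inferInstance
  haveI : IsScalarTower A C O := .of_algebraMap_smul fun r x => by
    rw [IsScalarTower.algebraMap_apply A B C, algebraMap_smul, algebraMap_smul]
  haveI : IsLocalization.AtPrime C (Q'.comap (algebraMap A B)) :=
    IsLocalization.isLocalization_isLocalization_atPrime_isLocalization P.primeCompl C Q'
  have h1 : IsBaseChange B f := (isLocalizedModule_iff_isBaseChange P.primeCompl B f).mp hf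
  have h2 : IsBaseChange C g :=
    (isLocalizedModule_iff_isBaseChange Q'.primeCompl C g).mp inferInstance
  have h3 := h1.comp h2
  haveI := (isLocalizedModule_iff_isBaseChange (Q'.comap (algebraMap A B)).primeCompl C _).mpr h3
  have e := IsLocalizedModule.linearEquiv (Q'.comap (algebraMap A B)).primeCompl
    (LocalizedModule.mkLinearMap (Q'.comap (algebraMap A B)).primeCompl M) ((g.restrictScalars A).comp f)
  have : Module.Flat A O := Module.Flat.of_linearEquiv e.symm
  exact (Module.flat_iff_of_isLocalization (R := A) B P.primeCompl _).mpr this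

theorem hhFD_equiv {B : Type} [CommRing B] (n : ℕ) {M N : Type} [AddCommGroup M] [Module B M]
    [AddCommGroup N] [Module B N] (e : M ≃ₗ[B] N) (h : hhFD B n M) : hhFD B n N := by
  cases n with
  | zero => exact @Module.Flat.of_linearEquiv _ _ _ _ _ _ _ _ h e.symm
  | succ n =>
    obtain ⟨K, F, _, _, _, _, i, f, hF, hi, he, hf, hK⟩ := h
    refine ⟨K, F, _, _, _, _, i, e.toLinearMap ∘ₗ f, hF, hi, ?_, ?_, hK⟩
    · intro x
      rw [← he x]; simp
    · exact e.surjective.comp hf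

theorem hh_flat_step {A Ω : Type} (𝕂 : Type) [CommRing A] [IsNoetherianRing A] [CommRing Ω]
    [Algebra A Ω] [IsDomain Ω] [IsIntegrallyClosed Ω] [Field 𝕂] [Algebra Ω 𝕂] [IsFractionRing Ω 𝕂]
    [IsAlgClosed 𝕂] (p : ℕ) [Fact p.Prime] [CharP Ω p] [Algebra.IsIntegral A Ω]
    (hinj : Injective (algebraMap A Ω)) (n : ℕ) (hFD : hhFD A n Ω) (P : Ideal A) [P.IsPrime]
    (IH : ∀ (Q : Ideal A) [Q.IsPrime], Q < P → Module.Flat A (LocalizedModule Q.primeCompl Ω)) :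
    Module.Flat A (LocalizedModule P.primeCompl Ω) := by
  let B := Localization.AtPrime P
  let S := Algebra.algebraMapSubmonoid Ω P.primeCompl
  let Ω' := Localization S
  have hS : S ≤ nonZeroDivisors Ω := by
    rintro _ ⟨c, hc, rfl⟩
    rw [mem_nonZeroDivisors_iff_ne_zero]
    intro h0
    exact hc ((injective_iff_map_eq_zero _).mp hinj _ h0 ▸ P.zero_mem)
  haveI : IsDomain Ω' := IsLocalization.isDomain_localization hS
  haveI : IsIntegrallyClosed Ω' := isIntegrallyClosed_of_isLocalization Ω' S hS
  letI : Algebra Ω' 𝕂 := (IsLocalization.lift (M := S) (g := algebraMap Ω 𝕂) fun s =>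
    (IsLocalization.map_units 𝕂 (⟨s, hS s.2⟩ : nonZeroDivisors Ω))).toAlgebra
  haveI : IsScalarTower Ω Ω' 𝕂 := .of_algebraMap_eq fun x => by
    rw [RingHom.algebraMap_toAlgebra, IsLocalization.lift_eq]
  haveI : IsFractionRing Ω' 𝕂 := IsFractionRing.isFractionRing_of_isDomain_of_isLocalization S Ω' 𝕂
  have hinj1 : Injective (algebraMap Ω Ω') := IsLocalization.injective Ω' hS
  haveI : CharP Ω' p := charP_of_injective_algebraMap hinj1 p
  haveI : Algebra.IsIntegral B Ω' := ⟨isIntegral_localization (M := P.primeCompl) (S := Ω)⟩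
  have hinj' : Injective (algebraMap B Ω') :=
    by
    haveI : IsLocalization (Submonoid.map (algebraMap A Ω) P.primeCompl) Ω' :=
      Localization.isLocalization (M := S)
    exact IsLocalization.map_injective_of_injective P.primeCompl B Ω' hinj
  have hloc : ∀ (Q : Ideal B) [Q.IsPrime], Q ≠ maximalIdeal B →
      Module.Flat B (LocalizedModule Q.primeCompl Ω') := by
    intro Q _ hQ
    refine hh_loc_loc P (IsScalarTower.toAlgHom A Ω Ω').toLinearMap Q (IH _ ?_)
    refine lt_of_le_of_ne ?_ ?_
    · refine le_trans ?_ (IsLocalization.AtPrime.under_maximalIdeal B P).le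
      exact Ideal.comap_mono (IsLocalRing.le_maximalIdeal Ideal.IsPrime.ne_top')
    · intro h
      apply hQ
      rw [← IsLocalization.map_under P.primeCompl B Q, Ideal.under_def, h]
      exact IsLocalization.AtPrime.map_eq_maximalIdeal P B
  have hPF := hh_PF_of_flat hinj' hloc
  let e : LocalizedModule P.primeCompl Ω ≃ₗ[A] Ω' :=
    IsLocalizedModule.linearEquiv P.primeCompl (LocalizedModule.mkLinearMap _ Ω)
      (IsScalarTower.toAlgHom A Ω Ω').toLinearMap
  let e' : LocalizedModule P.primeCompl Ω ≃ₗ[B] Ω' :=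
    e.extendScalarsOfIsLocalization P.primeCompl B
  have hflat : Module.Flat B Ω' := by
    refine hh_D n Ω' (hhFD_equiv n e' (hhFD_localize P.primeCompl n Ω hFD)) ?_ hloc
    intro rs h1 h2
    exact hh_reg_Omega 𝕂 p hinj' hPF _ rs ⟨h1, h2⟩ le_rfl
  have : Module.Flat A Ω' :=
    (Module.flat_iff_of_isLocalization (R := A) B P.primeCompl _).mp hflat
  exact Module.Flat.of_linearEquiv e

theorem hh_flat {A Ω : Type} (𝕂 : Type) [CommRing A] [IsNoetherianRing A] [CommRing Ω]
    [Algebra A Ω] [IsDomain Ω] [IsIntegrallyClosed Ω] [Field 𝕂] [Algebra Ω 𝕂] [IsFractionRing Ω 𝕂]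
    [IsAlgClosed 𝕂] (p : ℕ) [Fact p.Prime] [CharP Ω p] [Algebra.IsIntegral A Ω]
    (hinj : Injective (algebraMap A Ω)) (n : ℕ) (hFD : hhFD A n Ω) :
    Module.Flat A Ω := by
  have key : ∀ P : PrimeSpectrum A, Module.Flat A (LocalizedModule P.asIdeal.primeCompl Ω) := by
    intro P
    induction h : P.asIdeal.height using WellFoundedLT.induction generalizing P with
    | _ m ih =>
      exact hh_flat_step 𝕂 p hinj n hFD P.asIdeal fun Q hQ hlt => ih Q.height
        (h ▸ Ideal.height_strict_mono_of_isPrime_of_isPrime hlt) ⟨Q, hQ⟩ rfl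
  exact Module.flat_of_localized_maximal _ fun P hP => key ⟨P, hP.isPrime⟩

end Part8


section Part9
open Function RingTheory.Sequence

theorem hh_mem_span_X {σ k : Type} [Field k] (s : Finset σ) (f : MvPowerSeries σ k) :
    f ∈ Ideal.span ((MvPowerSeries.X : σ → MvPowerSeries σ k) '' (s : Set σ)) ↔
      ∀ m : σ →₀ ℕ, (∀ j ∈ s, m j = 0) → MvPowerSeries.coeff m f = 0 := by
  classical
  induction s using Finset.induction_on generalizing f with
  | empty =>
    simp only [Finset.coe_empty, Set.image_empty, Ideal.span_empty, Ideal.mem_bot]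
    constructor
    · rintro rfl m _; simp
    · intro h; ext m; simpa using h m (by simp)
  | insert a s ha ih =>
    rw [Finset.coe_insert, Set.image_insert_eq, Ideal.mem_span_insert]
    constructor
    · rintro ⟨c, z, hz, rfl⟩ m hm
      rw [map_add, (ih z).mp hz m fun j hj => hm j (Finset.mem_insert_of_mem hj), add_zero]
      exact MvPowerSeries.X_dvd_iff.mp (Dvd.intro_left c rfl) m (hm a (Finset.mem_insert_self _ _))
    · intro h
      let g : MvPowerSeries σ k := fun m => if m a = 0 then 0 else MvPowerSeries.coeff m f
      have hg : ∀ m, MvPowerSeries.coeff m g = if m a = 0 then 0 else MvPowerSeries.coeff m f :=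
        fun m => rfl
      obtain ⟨c, hc⟩ : MvPowerSeries.X a ∣ g := MvPowerSeries.X_dvd_iff.mpr fun m hm => by
        rw [hg, if_pos hm]
      refine ⟨c, f - g, (ih _).mpr fun m hm => ?_, by rw [mul_comm, ← hc]; ring⟩
      rw [map_sub, hg]
      split_ifs with h0
      · rw [sub_zero]
        refine h m fun j hj => ?_
        rcases Finset.mem_insert.mp hj with rfl | hj
        · exact h0
        · exact hm j hj
      · rw [sub_self]

theorem hh_prime_X {σ k : Type} [Field k] (s : Finset σ) :
    (Ideal.span ((MvPowerSeries.X : σ → MvPowerSeries σ k) '' (s : Set σ))).IsPrime := by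
  classical
  let ρ : MvPowerSeries σ k → MvPowerSeries σ k := fun f m =>
    if ∀ j ∈ s, m j = 0 then MvPowerSeries.coeff m f else 0
  have hρ : ∀ f m, MvPowerSeries.coeff m (ρ f) =
    if ∀ j ∈ s, m j = 0 then MvPowerSeries.coeff m f else 0 := fun f m => rfl
  have hmem : ∀ f, f ∈ Ideal.span ((MvPowerSeries.X : σ → MvPowerSeries σ k) '' (s : Set σ)) ↔
      ρ f = 0 := by
    intro f
    rw [hh_mem_span_X]
    constructor
    · intro h
      ext m
      rw [hρ, map_zero]
      split_ifs with h0
      · exact h m h0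
      · rfl
    · intro h m hm
      have := hρ f m
      rw [h, if_pos hm, map_zero] at this
      exact this.symm
  have hmul : ∀ f g, ρ (f * g) = ρ f * ρ g := by
    intro f g
    ext m
    rw [hρ, MvPowerSeries.coeff_mul, MvPowerSeries.coeff_mul]
    split_ifs with h0
    · refine Finset.sum_congr rfl fun q hq => ?_
      have hq' := Finset.HasAntidiagonal.mem_antidiagonal.mp hq
      have h1 : ∀ j ∈ s, q.1 j = 0 ∧ q.2 j = 0 := by
        intro j hj
        have := h0 j hj
        rw [← hq', Finsupp.add_apply] at this
        omega
      rw [hρ, hρ, if_pos fun j hj => (h1 j hj).1, if_pos fun j hj => (h1 j hj).2]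
    · symm
      refine Finset.sum_eq_zero fun q hq => ?_
      have hq' := Finset.HasAntidiagonal.mem_antidiagonal.mp hq
      rw [hρ, hρ]
      by_cases h1 : ∀ j ∈ s, q.1 j = 0
      · by_cases h2 : ∀ j ∈ s, q.2 j = 0
        · exfalso
          apply h0
          intro j hj
          rw [← hq', Finsupp.add_apply, h1 j hj, h2 j hj]
        · rw [if_neg h2, mul_zero]
      · rw [if_neg h1, zero_mul]
  refine ⟨?_, ?_⟩
  · rw [Ne, Ideal.eq_top_iff_one, hh_mem_span_X]
    intro h
    have := h 0 (by simp)
    simp at this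
  · intro f g h
    rw [hmem, hmul] at h
    rw [hmem, hmem]
    exact mul_eq_zero.mp h

theorem hh_ofList_X {σ k : Type} [Field k] [DecidableEq σ] (l : List σ) :
    Ideal.ofList (l.map (MvPowerSeries.X : σ → MvPowerSeries σ k)) =
      Ideal.span ((MvPowerSeries.X : σ → MvPowerSeries σ k) '' (l.toFinset : Set σ)) := by
  rw [Ideal.ofList]
  congr 1
  ext f
  simp

theorem hh_reg_X {σ k : Type} [Field k] (l : List σ) (hl : l.Nodup) :
    IsWeaklyRegular (MvPowerSeries σ k) (l.map (MvPowerSeries.X : σ → MvPowerSeries σ k)) := by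
  classical
  induction l using List.reverseRecOn with
  | nil => exact IsWeaklyRegular.nil _ _
  | append_singleton l a ih =>
    rw [List.nodup_append] at hl
    rw [List.map_append, isWeaklyRegular_append_iff]
    refine ⟨ih hl.1, ?_⟩
    rw [List.map_singleton, isWeaklyRegular_singleton_iff, isSMulRegular_iff_right_eq_zero_of_smul]
    intro q hq
    obtain ⟨f, rfl⟩ := Submodule.Quotient.mk_surjective _ q
    rw [← Submodule.Quotient.mk_smul, Submodule.Quotient.mk_eq_zero] at hq
    rw [Submodule.Quotient.mk_eq_zero]
    simp only [smul_eq_mul, Ideal.mul_top] at hq ⊢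
    rw [hh_ofList_X] at hq ⊢
    refine ((hh_prime_X l.toFinset).mem_or_mem hq).resolve_left ?_
    rw [hh_mem_span_X]
    intro h
    have := h (Finsupp.single a 1) fun j hj => by
      rw [Finsupp.single_apply, if_neg]
      rintro rfl
      exact hl.2.2 a (List.mem_toFinset.mp hj) a (by simp) rfl
    simp at this

theorem hh_max_X {σ k : Type} [Field k] [Fintype σ] :
    Ideal.span (Set.range (MvPowerSeries.X : σ → MvPowerSeries σ k)) =
      maximalIdeal (MvPowerSeries σ k) := by
  classical
  ext f
  rw [← Set.image_univ, ← Finset.coe_univ, hh_mem_span_X, mem_maximalIdeal, mem_nonunits_iff,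
    MvPowerSeries.isUnit_iff_constantCoeff, isUnit_iff_ne_zero, not_not]
  constructor
  · intro h
    simpa using h 0 (by simp)
  · intro h m hm
    have : m = 0 := by ext j; simpa using hm j (Finset.mem_univ j)
    rw [this]
    simpa using h

theorem hh_FD_X {k : Type} [Field k] (d : ℕ) (M : Type) [AddCommGroup M]
    [Module (MvPowerSeries (Fin d) k) M] : hhFD (MvPowerSeries (Fin d) k) d M := by
  have := hh_gldim ((List.finRange d).map (MvPowerSeries.X : _ → MvPowerSeries (Fin d) k))
    (hh_reg_X _ (List.nodup_finRange d)) (by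
      rw [hh_ofList_X, ← hh_max_X]
      congr 1
      simp) M
  simpa using this

end Part9

section Part10
open Polynomial in
lemma hh_step {F S k : Type} [Field F] [CommRing S] [Field k] (j : F →+* S) (π : S →+* k)
    {p : ℕ} (hp : p.Prime) (s : S) (c : F) (hs : s ^ p = j c) (hno : ∀ b, b ^ p ≠ c)
    (q : Polynomial F) (hq : π (q.eval₂ j s) = 0) : q.eval₂ j s = 0 := by
  have hirr := X_pow_sub_C_irreducible_of_prime hp hno
  have h0 : (X ^ p - C c : Polynomial F).eval₂ j s = 0 := by
    simp [eval₂_sub, hs]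
  by_cases hd : (X ^ p - C c : Polynomial F) ∣ q
  · obtain ⟨r, rfl⟩ := hd
    rw [eval₂_mul, h0, zero_mul]
  · exfalso
    obtain ⟨a, b, hab⟩ := (Irreducible.coprime_iff_not_dvd hirr).2 hd
    have := congrArg (fun r => π (Polynomial.eval₂ j s r)) hab
    simp only [eval₂_add, eval₂_mul, h0, map_add, map_mul, hq, eval₂_one, map_one, mul_zero, map_zero, add_zero] at this
    exact zero_ne_one this

lemma hh_section {S k : Type} [CommRing S] [Field k] (p : ℕ) [hp : Fact p.Prime] [CharP S p]
    (π : S →+* k) (hπ : Function.Surjective π)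
    (hsq : ∀ x y, π x = 0 → π y = 0 → x * y = 0) : ∃ s : k →+* S, ∀ a, π (s a) = a := by
  have hp2 : 2 ≤ p := hp.out.two_le
  have hnil : ∀ z, π z = 0 → z ^ p = 0 := by
    intro z hz
    obtain ⟨r, rfl⟩ := Nat.exists_eq_add_of_le hp2
    rw [pow_add, pow_two, hsq z z hz hz, zero_mul]
  let Z : Set (Subring S) := {L | (∀ x, x ^ p ∈ L) ∧ ∀ x ∈ L, π x = 0 → x = 0}
  have hbase : (frobenius S p).range ∈ Z := by
    refine ⟨fun x => ⟨x, rfl⟩, ?_⟩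
    rintro _ ⟨z, rfl⟩ hz
    rw [frobenius_def] at hz ⊢
    rw [map_pow] at hz
    exact hnil z (pow_eq_zero_iff (by omega) |>.1 hz)
  obtain ⟨L, -, hLmax⟩ := zorn_le_nonempty₀ Z (by
    intro c hc hch y hy
    have hne : c.Nonempty := ⟨y, hy⟩
    have hdir : DirectedOn (· ≤ ·) c := hch.directedOn
    refine ⟨sSup c, ⟨fun x => ?_, fun x hx h0 => ?_⟩, fun z hz => le_sSup hz⟩
    · exact (Subring.mem_sSup_of_directedOn hne hdir).2 ⟨y, hy, (hc hy).1 x⟩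
    · obtain ⟨l, hl, hxl⟩ := (Subring.mem_sSup_of_directedOn hne hdir).1 hx
      exact (hc hl).2 x hxl h0) _ hbase
  obtain ⟨hL1, hL2⟩ := hLmax.prop
  have hinv : ∀ z, π z ≠ 0 → ∃ u, z * u = 1 := by
    intro z hz
    obtain ⟨w, hw⟩ := hπ (π z)⁻¹
    have h1 : π (z * w - 1) = 0 := by simp [hw, hz]
    have h2 := hsq _ _ h1 h1
    exact ⟨w * (1 - (z * w - 1)), by linear_combination -h2⟩
  have hF : IsField L := by
    refine ⟨⟨0, 1, ?_⟩, mul_comm, ?_⟩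
    · intro h
      have := congrArg (fun t : L => π t) h
      simp at this
    · intro a ha
      have hpa : π a ≠ 0 := fun h => ha (Subtype.ext (hL2 _ a.2 h))
      obtain ⟨u, hu⟩ := hinv _ hpa
      refine ⟨⟨(a:S) ^ (p-1) * u ^ p, L.mul_mem (L.pow_mem a.2 _) (hL1 u)⟩, Subtype.ext ?_⟩
      show (a:S) * ((a:S) ^ (p-1) * u ^ p) = 1
      rw [← mul_assoc, ← pow_succ', Nat.sub_add_cancel (by omega), ← mul_pow, hu, one_pow]
  have hsurj : ∀ a : k, ∃ l : L, π l = a := by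
    intro a
    by_contra hno
    push Not at hno
    obtain ⟨s, rfl⟩ := hπ a
    letI : Field L := hF.toField
    let j : L →+* S := L.subtype
    let c : L := ⟨s ^ p, hL1 s⟩
    have hc : ∀ b : L, b ^ p ≠ c := by
      intro b hb
      have h1 : (b : S) ^ p = s ^ p := congrArg (fun t : L => (t : S)) hb
      have h2 : (π (b:S) - π s) ^ p = 0 := by
        haveI : CharP k p := by
          rw [CharP.charP_iff_prime_eq_zero hp.out]
          rw [← map_natCast π, CharP.cast_eq_zero, map_zero]
        rw [sub_pow_char, ← map_pow, h1, map_pow, sub_self]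
      exact hno b (sub_eq_zero.1 (pow_eq_zero_iff (by omega) |>.1 h2))
    let L' : Subring S := (Polynomial.eval₂RingHom j s).range
    have hL' : L' ∈ Z := by
      refine ⟨fun x => ⟨Polynomial.C ⟨x ^ p, hL1 x⟩, ?_⟩, ?_⟩
      · simp [j]
      · rintro _ ⟨q, rfl⟩ hq
        exact hh_step j π hp.out s c rfl hc q hq
    have hle : L ≤ L' := fun x hx => ⟨Polynomial.C ⟨x, hx⟩, by simp [j]⟩
    have := hLmax.le_of_ge hL' hle
    have hs : s ∈ L := this ⟨Polynomial.X, by simp⟩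
    exact hno ⟨s, hs⟩ rfl
  let e := RingEquiv.ofBijective (π.comp L.subtype) ⟨by
    rw [injective_iff_map_eq_zero]
    intro a ha
    exact Subtype.ext (hL2 _ a.2 ha), fun a => hsurj a⟩
  exact ⟨L.subtype.comp e.symm.toRingHom, fun a => e.apply_symm_apply a⟩

lemma hh_smooth (k : Type) [Field k] (p : ℕ) [hp : Fact p.Prime] [Algebra (ZMod p) k] :
    Algebra.FormallySmooth (ZMod p) k := by
  refine Algebra.FormallySmooth.of_comp_surjective ?_
  intro B _ _ I hI g
  haveI : CharP k p := charP_of_injective_algebraMap (algebraMap (ZMod p) k).injective p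
  let S : Subring (B × k) := RingHom.eqLocus
    ((Ideal.Quotient.mk I).comp (RingHom.fst B k)) ((g : k →+* B ⧸ I).comp (RingHom.snd B k))
  let π : S →+* k := (RingHom.snd B k).comp S.subtype
  haveI : Nontrivial S := ⟨0, 1, fun h => by simpa [π] using congrArg π h⟩
  haveI : CharP S p := by
    haveI : CharP (B × k) p := by
      have : (p : B) = 0 := by
        rw [← map_natCast (algebraMap (ZMod p) B) p, CharP.cast_eq_zero, map_zero]
      constructor
      intro x
      constructor
      · intro h
        exact (CharP.cast_eq_zero_iff k p x).1 (congrArg Prod.snd h)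
      · rintro ⟨r, rfl⟩
        ext <;> simp [this]
    exact charP_of_injective_ringHom (f := S.subtype) Subtype.val_injective p |> fun _ => by
      constructor
      intro x
      rw [← CharP.cast_eq_zero_iff (B × k) p x]
      constructor
      · intro h; simpa using congrArg S.subtype h
      · intro h; apply Subtype.ext; simpa using h
  obtain ⟨s, hs⟩ := hh_section p π (by
    intro a
    obtain ⟨b, hb⟩ := Ideal.Quotient.mk_surjective (g a)
    exact ⟨⟨(b, a), hb⟩, rfl⟩) (by
    rintro ⟨⟨x1, x2⟩, hx⟩ ⟨⟨y1, y2⟩, hy⟩ hx0 hy0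
    change x2 = 0 at hx0
    change y2 = 0 at hy0
    subst hx0 hy0
    have hx' : x1 ∈ I := Ideal.Quotient.eq_zero_iff_mem.1 (by simpa [S, RingHom.eqLocus] using hx)
    have hy' : y1 ∈ I := Ideal.Quotient.eq_zero_iff_mem.1 (by simpa [S, RingHom.eqLocus] using hy)
    have : x1 * y1 ∈ I ^ 2 := by rw [pow_two]; exact Ideal.mul_mem_mul hx' hy'
    rw [hI] at this
    apply Subtype.ext
    exact Prod.ext this (mul_zero _))
  refine ⟨{ ((RingHom.fst B k).comp (S.subtype.comp s)) with
    commutes' := fun r => ?_ }, ?_⟩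
  · exact RingHom.congr_fun (Subsingleton.elim
      (((RingHom.fst B k).comp (S.subtype.comp s)).comp (algebraMap (ZMod p) k)) (algebraMap (ZMod p) B)) r
  · ext a
    have h1 := (s a).2
    have h2 := hs a
    change Ideal.Quotient.mk I (s a).1.1 = g (s a).1.2 at h1
    change (s a).1.2 = a at h2
    rw [h2] at h1
    exact h1

lemma hh_coeff (R : Type) [CommRing R] [IsLocalRing R] [IsAdicComplete (maximalIdeal R) R]
    (p : ℕ) [Fact p.Prime] [CharP R p] :
    ∃ ι : ResidueField R →+* R, ∀ a, residue R (ι a) = a := by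
  letI : Algebra (ZMod p) R := ZMod.algebra R p
  haveI : Algebra.FormallySmooth (ZMod p) (ResidueField R) := hh_smooth _ p
  obtain ⟨g, hg⟩ := Algebra.FormallySmooth.exists_mkₐ_comp_eq_of_isAdicComplete
    (R := ZMod p) (A := ResidueField R) (S := R) (I := maximalIdeal R) (AlgHom.id (ZMod p) (ResidueField R))
  exact ⟨g, fun a => DFunLike.congr_fun hg a⟩
end Part10

section Part11
lemma hh_exists_map {R k : Type} [CommRing R] [Field k] [IsLocalRing R] [IsAdicComplete (maximalIdeal R) R]
    (ι : k →+* R) {d : ℕ} (x : Fin d → R) (hxm : ∀ i, x i ∈ maximalIdeal R) :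
    ∃ φ : MvPowerSeries (Fin d) k →+* R, (∀ i, φ (MvPowerSeries.X i) = x i) ∧
      ∀ c, φ (MvPowerSeries.C c) = ι c := by
  let m := maximalIdeal R
  let e := MvPolynomial.eval₂Hom ι x
  have hI : ∀ n, (MvPolynomial.idealOfVars (Fin d) k) ^ n ≤ (m ^ n).comap e := by
    intro n
    have h1 : MvPolynomial.idealOfVars (Fin d) k ≤ m.comap e := by
      unfold MvPolynomial.idealOfVars
      rw [Ideal.span_le]
      rintro _ ⟨i, rfl⟩
      simpa [e, m] using hxm i
    exact (Ideal.pow_right_mono h1 n).trans (Ideal.le_comap_pow e n)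
  let f : (n : ℕ) → MvPowerSeries (Fin d) k →+* R ⧸ m ^ n := fun n =>
    (Ideal.quotientMap (m ^ n) e (hI n)).comp (MvPowerSeries.truncTotalAlgHom (Fin d) k n).toRingHom
  have hf : ∀ {a b : ℕ} (hle : a ≤ b), (Ideal.Quotient.factorPow m hle).comp (f b) = f a := by
    intro a b hle
    ext q
    change Ideal.Quotient.mk (m ^ a) (e (MvPowerSeries.truncTotal b q)) =
      Ideal.Quotient.mk (m ^ a) (e (MvPowerSeries.truncTotal a q))
    rw [Ideal.Quotient.eq, ← map_sub]
    exact hI a (MvPowerSeries.truncTotal_sub_truncTotal_mem_pow_idealOfVars hle le_rfl q)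
  let φ := IsAdicComplete.liftRingHom m f hf
  have key : ∀ q : MvPolynomial (Fin d) k, φ (q : MvPowerSeries (Fin d) k) = e q := by
    intro q
    rw [← sub_eq_zero]
    refine IsHausdorff.haus (I := m) inferInstance _ fun n => ?_
    have h1 : Ideal.Quotient.mk (m ^ n) (φ (q : MvPowerSeries (Fin d) k)) = f n q :=
      IsAdicComplete.mk_liftRingHom m f hf n _
    have h2 : f n q = Ideal.Quotient.mk (m ^ n) (e q) := by
      have := (MvPowerSeries.truncTotalAlgHom (Fin d) k n).commutes q
      change Ideal.quotientMap (m ^ n) e (hI n) (MvPowerSeries.truncTotalAlgHom (Fin d) k n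
        (algebraMap (MvPolynomial (Fin d) k) (MvPowerSeries (Fin d) k) q)) = _
      rw [this]
      rfl
    rw [SModEq.zero, smul_eq_mul, Ideal.mul_top, ← Ideal.Quotient.eq]
    exact h1.trans h2
  refine ⟨φ, fun i => ?_, fun c => ?_⟩
  · rw [← MvPolynomial.coe_X, key]; simp [e]
  · rw [← MvPolynomial.coe_C, key]; simp [e]

lemma hh_pi_precomplete {A : Type} [CommRing A] (I : Ideal A) [IsPrecomplete I A] (r : ℕ) :
    IsPrecomplete I (Fin r → A) := by
  have hmem : ∀ n (v : Fin r → A), v ∈ (I ^ n • ⊤ : Submodule A (Fin r → A)) ↔ ∀ i, v i ∈ I ^ n := by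
    intro n v
    constructor
    · intro hv i
      have := Submodule.mem_map_of_mem (f := LinearMap.proj (R := A) (φ := fun _ : Fin r => A) i) hv
      rw [Submodule.map_smul''] at this
      have h2 := Submodule.smul_mono (le_refl (I ^ n)) (le_top : Submodule.map (LinearMap.proj (R := A) (φ := fun _ : Fin r => A) i) ⊤ ≤ ⊤) this
      simpa using h2
    · intro h
      rw [pi_eq_sum_univ' v]
      refine Submodule.sum_mem _ fun i _ => ?_
      exact Submodule.smul_mem_smul (h i) trivial
  constructor
  intro f hf
  have h1 : ∀ i, ∃ L : A, ∀ n, f n i ≡ L [SMOD (I ^ n • ⊤ : Submodule A A)] := by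
    intro i
    refine IsPrecomplete.prec inferInstance (f := fun n => f n i) ?_
    intro m n hmn
    have := hf hmn
    rw [SModEq.sub_mem, hmem] at this
    rw [SModEq.sub_mem]
    simpa using this i
  choose L hL using h1
  refine ⟨L, fun n => ?_⟩
  rw [SModEq.sub_mem, hmem]
  intro i
  have := hL i n
  rw [SModEq.sub_mem] at this
  simpa using this

lemma hh_finite_aux {A R : Type} [CommRing A] [CommRing R] [Algebra A R] (m : Ideal R) (hm : m.FG)
    (h : (1 : Submodule A R) ⊔ m.restrictScalars A = ⊤) (n : ℕ) :
    ∃ P : Submodule A R, P.FG ∧ P ⊔ (m ^ n).restrictScalars A = ⊤ := by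
  induction n with
  | zero => exact ⟨⊥, Submodule.fg_bot, by simp [Ideal.one_eq_top]⟩
  | succ n ih =>
    obtain ⟨P, hP, hPn⟩ := ih
    obtain ⟨F, hF⟩ := hm
    let V : Submodule A R := Submodule.span A (F : Set R)
    have hV : V.FG := ⟨F, rfl⟩
    have h1 : m.restrictScalars A ≤ V * ⊤ := by
      suffices hs : ∀ z ∈ Submodule.span R (F : Set R), z ∈ V * (⊤ : Submodule A R) by
        intro z hz
        refine hs z ?_
        change z ∈ m at hz
        rw [← hF] at hz
        exact hz
      intro z hz
      induction hz using Submodule.span_induction with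
      | mem z hz => simpa using Submodule.mul_mem_mul (M := V) (N := ⊤) (Submodule.subset_span hz) (Submodule.mem_top (x := (1:R)))
      | zero => exact Submodule.zero_mem _
      | add a b ha hb h1 h2 => exact Submodule.add_mem _ h1 h2
      | smul a b hb h2 =>
        have h3 := Submodule.mul_mem_mul h2 (Submodule.mem_top (R := A) (x := a))
        rw [mul_assoc V] at h3
        have h4 : b * a ∈ V * (⊤ : Submodule A R) := mul_le_mul' (le_refl V) le_top h3
        have h5 : a • b = b * a := mul_comm _ _
        rw [h5]; exact h4
    have hVm : V ≤ m.restrictScalars A := by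
      rw [Submodule.span_le]
      intro z hz
      change z ∈ m
      rw [← hF]; exact Submodule.subset_span hz
    refine ⟨1 ⊔ V * P, Submodule.FG.sup ?_ (hV.mul hP), ?_⟩
    · rw [Submodule.one_eq_span]; exact Submodule.fg_span_singleton _
    · rw [eq_top_iff, ← h]
      refine sup_le (le_sup_left.trans le_sup_left) (h1.trans ?_)
      rw [← hPn, Submodule.mul_sup]
      refine sup_le (le_sup_right.trans le_sup_left) (le_trans ?_ le_sup_right)
      rw [Submodule.mul_le]
      intro a ha b hb
      change a * b ∈ m ^ (n+1)
      rw [pow_succ']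
      exact Ideal.mul_mem_mul (hVm ha) hb

lemma hh_finite_complete {A R : Type} [CommRing A] [CommRing R] [Algebra A R] (I : Ideal A)
    [IsPrecomplete I A] [IsHausdorff I R] (P : Submodule A R) (hP : P.FG) (h : P ⊔ I • ⊤ = ⊤) :
    Module.Finite A R := by
  obtain ⟨r, g, hg⟩ := Submodule.fg_iff_exists_fin_generating_family.1 hP
  haveI := hh_pi_precomplete I r
  have := surjective_of_mkQ_comp_surjective (I := I) (f := Fintype.linearCombination A g) (by
    intro q
    obtain ⟨z, rfl⟩ := Submodule.mkQ_surjective _ q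
    have hz : z ∈ P ⊔ I • ⊤ := by rw [h]; trivial
    obtain ⟨a, ha, b, hb, rfl⟩ := Submodule.mem_sup.1 hz
    rw [← hg, ← Fintype.range_linearCombination] at ha
    obtain ⟨c, rfl⟩ := ha
    refine ⟨c, ?_⟩
    rw [LinearMap.comp_apply, map_add, left_eq_add]
    simpa using hb)
  exact Module.Finite.of_surjective _ this

lemma hh_dim_le {A R : Type} [CommRing A] [CommRing R] (φ : A →+* R) (h : φ.IsIntegral) :
    ringKrullDim R ≤ ringKrullDim A := by
  letI := φ.toAlgebra
  haveI : Algebra.IsIntegral A R := ⟨h⟩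
  refine Order.krullDim_le_of_strictMono (PrimeSpectrum.comap φ) ?_
  intro P Q hPQ
  exact Ideal.IsIntegral.comap_lt_comap (R := A) (A := R) (I := P.asIdeal) (J := Q.asIdeal) hPQ

lemma hh_cohen (R : Type) [CommRing R] [IsDomain R] [IsNoetherianRing R] [IsLocalRing R]
    [IsAdicComplete (maximalIdeal R) R]
    (p : ℕ) [Fact p.Prime] [CharP R p] {d : ℕ} (x : Fin d → R)
    (hdim : ringKrullDim R = d) (hrad : (Ideal.span (Set.range x)).radical = maximalIdeal R) :
    ∃ φ : MvPowerSeries (Fin d) (ResidueField R) →+* R, φ.Finite ∧ Function.Injective φ ∧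
      ∀ i, φ (MvPowerSeries.X i) = x i := by
  obtain ⟨ι, hι⟩ := hh_coeff R p
  have hxm : ∀ i, x i ∈ maximalIdeal R := by
    intro i
    rw [← hrad]
    exact Ideal.le_radical (Ideal.subset_span ⟨i, rfl⟩)
  obtain ⟨φ, hφX, hφC⟩ := hh_exists_map ι x hxm
  have hmap : Ideal.map φ (Ideal.span (Set.range MvPowerSeries.X)) = Ideal.span (Set.range x) := by
    rw [Ideal.map_span, ← Set.range_comp]
    congr 2
    ext i
    exact hφX i
  have hfin : φ.Finite := by
    letI := φ.toAlgebra
    let I : Ideal (MvPowerSeries (Fin d) (ResidueField R)) := Ideal.span (Set.range MvPowerSeries.X)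
    have hIR : (I • ⊤ : Submodule (MvPowerSeries (Fin d) (ResidueField R)) R) =
        (Ideal.span (Set.range x)).restrictScalars _ := by
      rw [Ideal.smul_top_eq_map]
      congr 1
    have hle : Ideal.span (Set.range x) ≤ maximalIdeal R := by
      rw [← hrad]; exact Ideal.le_radical
    haveI : IsHausdorff I R := by
      refine (IsHausdorff.map_algebraMap_iff (S := R)).mp ?_
      change IsHausdorff (Ideal.map φ I) R
      rw [hmap]
      constructor
      intro z hz
      refine IsHausdorff.haus (I := maximalIdeal R) inferInstance z fun n => ?_
      have := hz n
      rw [SModEq.zero] at this ⊢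
      exact Submodule.smul_mono_left (Ideal.pow_right_mono hle n) this
    obtain ⟨N, hN⟩ := Ideal.exists_radical_pow_le_of_fg (Ideal.span (Set.range x)) (IsNoetherian.noetherian _)
    rw [hrad] at hN
    obtain ⟨P, hP, hPN⟩ := hh_finite_aux (A := MvPowerSeries (Fin d) (ResidueField R)) (maximalIdeal R)
      (IsNoetherian.noetherian _) (by
        rw [eq_top_iff]
        intro r _
        have : r = φ (MvPowerSeries.C (residue R r)) + (r - φ (MvPowerSeries.C (residue R r))) := by ring
        rw [this]
        refine Submodule.add_mem_sup ?_ ?_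
        · rw [Submodule.mem_one]
          exact ⟨_, rfl⟩
        · change _ ∈ maximalIdeal R
          rw [← residue_eq_zero_iff, map_sub, hφC, hι, sub_self]) N
    refine hh_finite_complete I P hP ?_
    rw [hIR, eq_top_iff, ← hPN]
    exact sup_le_sup_left (fun z hz => hN hz) _
  refine ⟨φ, hfin, ?_, hφX⟩
  rw [injective_iff_map_eq_zero]
  intro a ha
  by_contra ha0
  have hA : ringKrullDim (MvPowerSeries (Fin d) (ResidueField R)) ≤ d := by
    refine (ringKrullDim_le_spanFinrank_maximalIdeal _).trans ?_
    rw [← hh_max_X]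
    have h1 := Submodule.spanFinrank_span_le_ncard_of_finite (R := MvPowerSeries (Fin d) (ResidueField R)) (Set.finite_range (MvPowerSeries.X (σ := Fin d) (R := ResidueField R)))
    have h2 : (Set.range (MvPowerSeries.X (σ := Fin d) (R := ResidueField R))).ncard ≤ d := by
      rw [← Set.image_univ]
      refine (Set.ncard_image_le).trans ?_
      simp [Set.ncard_univ]
    exact_mod_cast h1.trans h2
  have hq := ringKrullDim_quotient_succ_le_of_nonZeroDivisor (mem_nonZeroDivisors_of_ne_zero ha0)
  let ψ : (MvPowerSeries (Fin d) (ResidueField R) ⧸ Ideal.span {a}) →+* R :=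
    Ideal.Quotient.lift _ φ (by
      intro b hb
      obtain ⟨c, rfl⟩ := Ideal.mem_span_singleton'.1 hb
      rw [map_mul, ha, mul_zero])
  have hψ : ψ.IsIntegral := by
    refine RingHom.IsIntegral.tower_top (Ideal.Quotient.mk (Ideal.span {a})) ψ ?_
    exact hfin.to_isIntegral
  have h3 := hh_dim_le ψ hψ
  rw [hdim] at h3
  have h4 : (d : WithBot ℕ∞) + 1 ≤ d := (add_le_add_left h3 1).trans (hq.trans hA)
  have h5 : ((d + 1 : ℕ) : WithBot ℕ∞) ≤ (d : ℕ) := by exact_mod_cast h4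
  have h6 : d + 1 ≤ d := by exact_mod_cast h5
  omega
end Part11

section Part12
lemma hh_nzd {A T : Type} [CommRing A] [CommRing T] [Algebra A T] [Module.Flat A T] (I : Ideal A) [I.IsPrime]
    (b : A) (hb : b ∉ I) (t : T) (h : algebraMap A T b * t ∈ I.map (algebraMap A T)) :
    t ∈ I.map (algebraMap A T) := by
  have hs : ∀ z : T, z ∈ I.map (algebraMap A T) ↔ z ∈ (I • ⊤ : Submodule A T) := by
    intro z
    rw [Ideal.smul_top_eq_map]; rfl
  rw [hs] at h ⊢
  let e := TensorProduct.quotTensorEquivQuotSMul T I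
  let μ : (A ⧸ I) →ₗ[A] (A ⧸ I) := LinearMap.lsmul A (A ⧸ I) b
  have hμ : Function.Injective μ := by
    rw [injective_iff_map_eq_zero]
    intro q hq
    obtain ⟨a, rfl⟩ := Ideal.Quotient.mk_surjective q
    have h1 : Ideal.Quotient.mk I (b * a) = 0 := hq
    rw [Ideal.Quotient.eq_zero_iff_mem] at h1 ⊢
    exact (Ideal.IsPrime.mem_or_mem inferInstance h1).resolve_left hb
  have h2 := Module.Flat.rTensor_preserves_injective_linearMap (M := T) μ hμ
  have h3 : ∀ q, LinearMap.rTensor T μ q = b • q := by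
    intro q
    induction q with
    | zero => simp
    | tmul a c => rw [LinearMap.rTensor_tmul]; rfl
    | add a c h1 h2 => rw [map_add, h1, h2, smul_add]
  rw [injective_iff_map_eq_zero] at h2
  have h4 : e.symm (Submodule.Quotient.mk t) = 0 := by
    apply h2
    rw [h3, ← map_smul, ← Submodule.Quotient.mk_smul,
      (Submodule.Quotient.mk_eq_zero _).2 (show b • t ∈ (I • ⊤ : Submodule A T) by
        rw [Algebra.smul_def (A := T) b t]; exact h), map_zero]
  rwa [LinearEquiv.map_eq_zero_iff, Submodule.Quotient.mk_eq_zero] at h4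

open Polynomial in
lemma hh_colon {A T : Type} [CommRing A] [CommRing T] (ψ : A →+* T) (hψ : ψ.Flat) (I : Ideal A) [hI : I.IsPrime]
    (y : T) (hy : ψ.IsIntegralElem y) :
    ∃ j : ℕ, ∀ N u, y ^ N * u ∈ I.map ψ → y ^ j * u ∈ I.map ψ := by
  letI := ψ.toAlgebra
  haveI : Module.Flat A T := hψ
  obtain ⟨f, hf, hfy⟩ := hy
  have hex : ∃ j, f.coeff j ∉ I := ⟨f.natDegree, by
    rw [hf.coeff_natDegree]
    exact fun h => hI.ne_top ((Ideal.eq_top_iff_one _).2 h)⟩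
  classical
  let j := Nat.find hex
  have hj : f.coeff j ∉ I := Nat.find_spec hex
  have hlt : ∀ i < j, f.coeff i ∈ I := fun i hi => not_not.1 (Nat.find_min hex hi)
  let π := Ideal.Quotient.mk (I.map ψ)
  let F : Polynomial (T ⧸ I.map ψ) := f.map (π.comp ψ)
  have hFd : X ^ j ∣ F := by
    rw [X_pow_dvd_iff]
    intro i hi
    rw [coeff_map]
    exact Ideal.Quotient.eq_zero_iff_mem.2 (Ideal.mem_map_of_mem _ (hlt i hi))
  obtain ⟨g, hg⟩ := hFd
  have hg0 : g.coeff 0 = π (ψ (f.coeff j)) := by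
    have : F.coeff j = g.coeff 0 := by
      rw [hg]
      simpa using coeff_X_pow_mul g j 0
    rw [← this, coeff_map]; rfl
  have hFy : F.eval (π y) = 0 := by
    rw [eval_map, ← hom_eval₂, hfy, map_zero]
  rw [hg, ← divX_mul_X_add g, hg0] at hFy
  simp only [eval_mul, eval_add, eval_pow, eval_X, eval_C] at hFy
  set w := - eval (π y) g.divX with hw
  set c := π (ψ (f.coeff j)) with hc
  have h1 : c * π y ^ j = π y ^ (j+1) * w := by
    rw [hw]; linear_combination hFy
  have h2 : ∀ M, c ^ M * π y ^ j = π y ^ (j + M) * w ^ M := by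
    intro M
    induction M with
    | zero => simp
    | succ M ih =>
      calc c ^ (M+1) * π y ^ j = c ^ M * (c * π y ^ j) := by ring
        _ = (c ^ M * π y ^ j) * π y * w := by rw [h1]; ring
        _ = _ := by rw [ih]; ring
  refine ⟨j, fun N u hu => ?_⟩
  refine hh_nzd I (f.coeff j ^ N) (fun h => hj (hI.mem_of_pow_mem _ h)) _ ?_
  change ψ _ * _ ∈ I.map ψ
  have hu' : π y ^ N * π u = 0 := by
    rw [← map_pow, ← map_mul]; exact Ideal.Quotient.eq_zero_iff_mem.2 hu
  refine Ideal.Quotient.eq_zero_iff_mem.1 ?_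
  change π _ = 0
  rw [map_mul, map_pow, map_mul, map_pow, map_pow, ← mul_assoc, ← hc, h2 N, pow_add]
  linear_combination (π y ^ j * w ^ N) * hu'

lemma hh_RPlus_flat (R : Type) [CommRing R] [IsDomain R] (p : ℕ) [Fact p.Prime] [CharP R p]
    {d : ℕ} {k : Type} [Field k] (φ : MvPowerSeries (Fin d) k →+* R) (hfin : φ.Finite)
    (hinj : Function.Injective φ) :
    ((algebraMap R (integralClosure R (AlgebraicClosure (FractionRing R)))).comp φ).Flat := by
  let K := AlgebraicClosure (FractionRing R)
  have hRK : Function.Injective (algebraMap R K) := by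
    rw [IsScalarTower.algebraMap_eq R (FractionRing R) K]
    exact (algebraMap (FractionRing R) K).injective.comp (IsFractionRing.injective R (FractionRing R))
  have hRP : Function.Injective (algebraMap R (integralClosure R K)) := by
    intro a b hab
    exact hRK (congrArg Subtype.val hab)
  haveI : Algebra.IsAlgebraic R K := by
    exact (IsFractionRing.comap_isAlgebraic_iff (A := R) (K := FractionRing R) (C := K)).2 inferInstance
  haveI : IsFractionRing (integralClosure R K) K :=
    integralClosure.isFractionRing_of_algebraic (fun x hx => (map_eq_zero_iff _ hRK).1 hx)
  haveI : IsIntegrallyClosed (integralClosure R K) :=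
    (isIntegrallyClosed_iff_isIntegrallyClosedIn K).2 inferInstance
  haveI : CharP (integralClosure R K) p := charP_of_injective_algebraMap hRP p
  letI : Algebra (MvPowerSeries (Fin d) k) (integralClosure R K) :=
    ((algebraMap R (integralClosure R K)).comp φ).toAlgebra
  haveI : Algebra.IsIntegral (MvPowerSeries (Fin d) k) (integralClosure R K) := by
    constructor
    refine RingHom.IsIntegral.trans φ (algebraMap R (integralClosure R K)) hfin.to_isIntegral ?_
    exact (inferInstance : Algebra.IsIntegral R (integralClosure R K)).isIntegral
  exact hh_flat K p (hRP.comp hinj) d (hh_FD_X d _)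
end Part12

/-- With `T = R⁺(t_λ : λ ∈ Λ)` for an uncountable set `Λ` of indeterminates,
the colon ideal `(x₁, …, xₙ)T : y^∞` stabilizes at a finite power for every `1 ≤ n ≤ d`. -/
theorem stmt16 (R : Type) [CommRing R] [IsDomain R] [IsNoetherianRing R] [IsLocalRing R]
    [IsAdicComplete (maximalIdeal R) R]
    (p : ℕ) [Fact p.Prime] [CharP R p]
    [IsLocalRing (RPlus R)] (Λ : Type) [Uncountable Λ]
    [(Ideal.map (MvPolynomial.C (σ := Λ)) (maximalIdeal (RPlus R))).IsPrime]
    (d : ℕ) (x : Fin d → R) (hx : IsSOP R x)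
    (n : ℕ) (hn1 : 1 ≤ n) (hnd : n ≤ d) (y : R) :
    ∃ N₀ : ℕ, 0 < N₀ ∧
      (⨆ N : ℕ, Submodule.colon (R := TRing R Λ) (M := TRing R Λ)
          (Ideal.span (⇑(toT R Λ) '' (x '' {i | (i : ℕ) < n})))
          (Ideal.span {toT R Λ y ^ N})) =
        Submodule.colon (R := TRing R Λ) (M := TRing R Λ)
          (Ideal.span (⇑(toT R Λ) '' (x '' {i | (i : ℕ) < n})))
          (Ideal.span {toT R Λ y ^ N₀}) := by
  obtain ⟨φ, hfin, hinj, hφ⟩ := hh_cohen R p x hx.1 hx.2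
  have hflat1 := hh_RPlus_flat R p φ hfin hinj
  have hflat2 : RingHom.Flat (R := RPlus R) (S := TRing R Λ) (plusToT R Λ) := by
    unfold plusToT
    refine RingHom.Flat.comp ?_ ?_
    · exact RingHom.flat_algebraMap_iff.2 (inferInstance : Module.Flat (RPlus R) (MvPolynomial Λ (RPlus R)))
    · exact RingHom.flat_algebraMap_iff.2 (IsLocalization.flat _
        (Ideal.map (MvPolynomial.C (σ := Λ)) (maximalIdeal (RPlus R))).primeCompl)
  let ψ : MvPowerSeries (Fin d) (ResidueField R) →+* TRing R Λ := (toT R Λ).comp φ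
  have hψ : RingHom.Flat (S := TRing R Λ) ψ :=
    RingHom.Flat.comp (R := MvPowerSeries (Fin d) (ResidueField R)) (S := RPlus R) (T := TRing R Λ)
      (f := (algebraMap R (RPlus R)).comp φ) (g := plusToT R Λ) hflat1 hflat2
  let s : Finset (Fin d) := Finset.univ.filter fun i => (i : ℕ) < n
  let I : Ideal (MvPowerSeries (Fin d) (ResidueField R)) :=
    Ideal.span (MvPowerSeries.X '' (s : Set (Fin d)))
  haveI : I.IsPrime := hh_prime_X s
  have hI : I.map ψ = Ideal.span (⇑(toT R Λ) '' (x '' {i | (i : ℕ) < n})) := by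
    rw [Ideal.map_span, Set.image_image, Set.image_image]
    congr 1
    have hs : (s : Set (Fin d)) = {i : Fin d | (i : ℕ) < n} := by ext i; simp [s]
    rw [hs]
    refine Set.image_congr fun i _ => ?_
    change toT R Λ (φ _) = _
    rw [hφ]
  obtain ⟨j, hj⟩ := hh_colon ψ hψ I (toT R Λ y) (by
    obtain ⟨f, hf, hfy⟩ := hfin.to_isIntegral y
    exact ⟨f, hf, by rw [← Polynomial.hom_eval₂, hfy, map_zero]⟩)
  rw [hI] at hj
  have hmem : ∀ N u, u ∈ Submodule.colon (R := TRing R Λ) (M := TRing R Λ)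
          (Ideal.span (⇑(toT R Λ) '' (x '' {i | (i : ℕ) < n})))
          (Ideal.span {toT R Λ y ^ N}) ↔
      toT R Λ y ^ N * u ∈ Ideal.span (⇑(toT R Λ) '' (x '' {i | (i : ℕ) < n})) := by
    intro N u
    rw [Submodule.mem_colon]
    constructor
    · intro h
      have := h _ (Ideal.subset_span rfl)
      rwa [smul_eq_mul, mul_comm] at this
    · intro h q hq
      obtain ⟨r, rfl⟩ := Ideal.mem_span_singleton'.1 hq
      have h2 := Ideal.mul_mem_left _ r h
      rw [smul_eq_mul]
      convert h2 using 1
      ring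
  refine ⟨j + 1, Nat.succ_pos j, le_antisymm (iSup_le fun N u hu => ?_) ?_⟩
  · rw [hmem] at hu ⊢
    rw [pow_succ', mul_assoc]
    exact Ideal.mul_mem_left _ _ (hj N u hu)
  · exact le_iSup (fun N : ℕ => Submodule.colon (R := TRing R Λ) (M := TRing R Λ)
          (Ideal.span (⇑(toT R Λ) '' (x '' {i | (i : ℕ) < n})))
          (Ideal.span {toT R Λ y ^ N} : Set (TRing R Λ))) (j + 1)
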